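/- arXiv:1501.01489 — 2 statements merged into one kernel-verified Lean document; each statement's English description precedes it below -/
import Mathlib

section
/- Let S_n denote the number of single-chord strong components (strong components of size 1) in the directed intersection graph of the random oriented chord diagram D_n. Then S_n converges in distribution, as n→∞, to a Poisson random variable with mean 3; that is, for every integer m ≥ 0, lim_{n→∞} P(S_n = m) = e^{−3} 3^m / m!. Moreover, with high probability all strong components other than the single-chord ones form exactly one strong component (the giant component). -/
open scoped Classical
open Finset Filter

/-- A chord diagram of size `n`: a fixed-point-free involution of the `2n`
endpoints `0, 1, …, 2n-1` (endpoint `i` here corresponds to the label `i+1`). -/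
abbrev ChordDiagram (n : ℕ) :=
  {f : Fin (2*n) → Fin (2*n) // (∀ i, f (f i) = i) ∧ ∀ i, f i ≠ i}

/-- `c` lies strictly between `a` and `b`. -/
def Between {m : ℕ} (a b c : Fin m) : Prop := min a b < c ∧ c < max a b

/-- The chord of `C` containing endpoint `x` crosses the chord containing endpoint `u`:
exactly one of the two endpoints `u`, `C u` lies strictly between `x` and `C x`. -/
def Crosses {n : ℕ} (C : ChordDiagram n) (x u : Fin (2*n)) : Prop :=
  Xor' (Between x (C.1 x) u) (Between x (C.1 x) (C.1 u))

/-- Uniform probability of an event over all chord diagrams of size `n`. -/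
noncomputable def prob (n : ℕ) (E : ChordDiagram n → Prop) : ℝ :=
  ((Finset.univ.filter E).card : ℝ) / ((Finset.univ : Finset (ChordDiagram n)).card : ℝ)

/-- The degree of the chord of `C` containing endpoint `x`: the number of chords
crossing it (each chord counted once via its smaller endpoint). -/
noncomputable def chordDegree {n : ℕ} (C : ChordDiagram n) (x : Fin (2*n)) : ℕ :=
  (Finset.univ.filter fun u => u < C.1 u ∧ Crosses C x u).card

/-- The length of the chord of `C` containing endpoint `x`: the number of endpoints
on the smaller of the two arcs it determines. -/
def chordLength {n : ℕ} (C : ChordDiagram n) (x : Fin (2*n)) : ℕ :=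
  min (max (x:ℕ) (C.1 x : ℕ) - min (x:ℕ) (C.1 x : ℕ) - 1)
      (2*n - (max (x:ℕ) (C.1 x : ℕ) - min (x:ℕ) (C.1 x : ℕ)) - 1)

/-- Degree of the chord containing endpoint `1` (index `0`). -/
noncomputable def degreeC1 (n : ℕ) (C : ChordDiagram n) : ℕ :=
  if h : 0 < n then chordDegree C ⟨0, by omega⟩ else 0

/-- Length of the chord containing endpoint `1` (index `0`). -/
noncomputable def lengthC1 (n : ℕ) (C : ChordDiagram n) : ℕ :=
  if h : 0 < n then chordLength C ⟨0, by omega⟩ else 0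

/-- Membership in the component (w.r.t. the crossing relation) of the chord
containing the root endpoint. -/
def InRootComponent {n : ℕ} (C : ChordDiagram n) (root x : Fin (2*n)) : Prop :=
  x = root ∨ x = C.1 root ∨ Relation.ReflTransGen (fun a b => Crosses C a b) root x

/-- The chord containing `x` is simple: it joins two (cyclically) consecutive endpoints. -/
def IsSimple {n : ℕ} (C : ChordDiagram n) (x : Fin (2*n)) : Prop :=
  (C.1 x : ℕ) = ((x : ℕ) + 1) % (2*n) ∨ (x : ℕ) = ((C.1 x : ℕ) + 1) % (2*n)

/-- `C` is monolithic (with respect to `root`): every chord not in the root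
component is simple, and no two simple chords are next to each other. -/
def Monolithic {n : ℕ} (C : ChordDiagram n) (root : Fin (2*n)) : Prop :=
  (∀ x : Fin (2*n), ¬ InRootComponent C root x → IsSimple C x) ∧
  ¬ ∃ i : Fin (2*n), (C.1 i : ℕ) = ((i : ℕ) + 1) % (2*n) ∧
      ∃ j : Fin (2*n), (j : ℕ) = ((i : ℕ) + 2) % (2*n) ∧ (C.1 j : ℕ) = ((i : ℕ) + 3) % (2*n)

/-- `L_j`: the number of chords of length `j` in `C`. -/
noncomputable def lengthCount (n : ℕ) (j : ℕ) (C : ChordDiagram n) : ℕ :=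
  (Finset.univ.filter fun x : Fin (2*n) => x < C.1 x ∧ chordLength C x = j).card

/-- The endpoints of chords of `C` of length at least `k`. -/
noncomputable def lenAtLeast (n k : ℕ) (C : ChordDiagram n) : Finset (Fin (2*n)) :=
  Finset.univ.filter fun x => k ≤ chordLength C x

/-- The number of chords with endpoints in `S` crossing the chord containing `x`. -/
noncomputable def degreeIn {n : ℕ} (C : ChordDiagram n) (S : Finset (Fin (2*n)))
    (x : Fin (2*n)) : ℕ :=
  (S.filter fun u => u < C.1 u ∧ Crosses C x u).card

/-- `S` (a chord-closed set of endpoints) is a set of chords each crossing at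
least `k` other chords of `S`. -/
def IsCore {n : ℕ} (C : ChordDiagram n) (k : ℕ) (S : Finset (Fin (2*n))) : Prop :=
  (∀ x ∈ S, C.1 x ∈ S) ∧ ∀ x ∈ S, k ≤ degreeIn C S x

/-- The `k`-core: the union of all sets of chords in which every chord crosses
at least `k` other chords of the set. -/
noncomputable def kCore (n k : ℕ) (C : ChordDiagram n) : Finset (Fin (2*n)) :=
  Finset.univ.filter fun x => ∃ S : Finset (Fin (2*n)), IsCore C k S ∧ x ∈ S

/-- The number of chords in the `k`-core of `C`. -/
noncomputable def kCoreSize (n k : ℕ) (C : ChordDiagram n) : ℕ :=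
  ((kCore n k C).filter fun x => x < C.1 x).card

/-- `Z_k`: the number of chords of length strictly less than `k`. -/
noncomputable def shortCount (n k : ℕ) (C : ChordDiagram n) : ℕ :=
  (Finset.univ.filter fun x : Fin (2*n) => x < C.1 x ∧ chordLength C x < k).card

/-- `C` contains a balanced clique of size `m`: a set of `m` pairwise crossing
chords with exactly one endpoint in each of the `2m` blocks of length `⌊n/m⌋`. -/
def HasBalancedClique (n m : ℕ) (C : ChordDiagram n) : Prop :=
  ∃ S : Finset (Fin (2*n)),
    (∀ x ∈ S, C.1 x ∈ S) ∧
    (∀ x ∈ S, ∀ u ∈ S, u ≠ x → u ≠ C.1 x → Crosses C x u) ∧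
    (∀ t : ℕ, 1 ≤ t → t ≤ 2*m →
      (S.filter fun x => (t-1) * (n/m) ≤ (x:ℕ) ∧ (x:ℕ) < t * (n/m)).card = 1)

/-- An oriented chord diagram: a chord diagram together with auxiliary fair-coin
bits; the bit attached to a crossing pair of chords (indexed by their smaller
endpoints) decides which chord over-crosses the other. -/
abbrev OrientedChordDiagram (n : ℕ) := ChordDiagram n × (Fin (2*n) → Fin (2*n) → Bool)

/-- The smaller endpoint of the chord of `C` containing `x`. -/
def chordRep {n : ℕ} (C : ChordDiagram n) (x : Fin (2*n)) : Fin (2*n) := min x (C.1 x)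

/-- In the oriented diagram `D`, the chord containing `x` crosses and
over-crosses the chord containing `u`. -/
def OverD {n : ℕ} (D : OrientedChordDiagram n) (x u : Fin (2*n)) : Prop :=
  Crosses D.1 x u ∧
    ((chordRep D.1 x ≤ chordRep D.1 u ∧ D.2 (chordRep D.1 x) (chordRep D.1 u) = true) ∨
     (chordRep D.1 u < chordRep D.1 x ∧ D.2 (chordRep D.1 u) (chordRep D.1 x) = false))

/-- Uniform probability of an event over all oriented chord diagrams of size `n`
(this yields a uniformly random diagram with each crossing oriented by an
independent fair coin). -/
noncomputable def probD (n : ℕ) (E : OrientedChordDiagram n → Prop) : ℝ :=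
  ((Finset.univ.filter E).card : ℝ) /
    ((Finset.univ : Finset (OrientedChordDiagram n)).card : ℝ)

/-- The chords (given by their endpoints in `S`) are strongly connected in the
directed intersection graph of `D`, using only chords of `S`. -/
def StronglyConnectedIn {n : ℕ} (D : OrientedChordDiagram n) (S : Set (Fin (2*n))) : Prop :=
  ∀ c ∈ S, ∀ d ∈ S,
    Relation.ReflTransGen (fun a b => a ∈ S ∧ b ∈ S ∧ OverD D a b) c d

/-- The number of chords with both endpoints in the cyclic block
`{i, i+1, …, i+t-1}` (mod `2n`). -/
noncomputable def chordsInBlock (n : ℕ) (C : ChordDiagram n) (i t : ℕ) : ℕ :=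
  (Finset.univ.filter fun x : Fin (2*n) => x < C.1 x ∧
    (∃ a < t, (x:ℕ) = (i + a) % (2*n)) ∧ (∃ a < t, ((C.1 x : ℕ)) = (i + a) % (2*n))).card

/-- The chord of `x` reaches the chord of `u` in the directed intersection graph
(of the whole diagram); endpoints of the same chord represent the same vertex. -/
def ReachChord {n : ℕ} (D : OrientedChordDiagram n) (x u : Fin (2*n)) : Prop :=
  u = x ∨ u = D.1.1 x ∨ Relation.ReflTransGen (fun a b => OverD D a b) x u

/-- The chords of `x` and `u` lie in the same strong component. -/
def MutualReach {n : ℕ} (D : OrientedChordDiagram n) (x u : Fin (2*n)) : Prop :=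
  ReachChord D x u ∧ ReachChord D u x

/-- The number of single-chord strong components of `D`. -/
noncomputable def singleCount (n : ℕ) (D : OrientedChordDiagram n) : ℕ :=
  (Finset.univ.filter fun x : Fin (2*n) =>
    x < D.1.1 x ∧ ∀ u : Fin (2*n), u ≠ x → u ≠ D.1.1 x → ¬ MutualReach D x u).card



open scoped Classical
open Finset Filter

namespace Chord

/-- Matchings of `V`: involutions moving exactly the points of `V`. -/
noncomputable def MM {N : ℕ} (V : Finset (Fin N)) : Finset (Fin N → Fin N) :=
  univ.filter fun f => (∀ x, f (f x) = x) ∧ ∀ x, f x ≠ x ↔ x ∈ V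

lemma mem_MM {N : ℕ} {V : Finset (Fin N)} {f : Fin N → Fin N} :
    f ∈ MM V ↔ (∀ x, f (f x) = x) ∧ ∀ x, f x ≠ x ↔ x ∈ V := by
  simp [MM]

/-- Add the chord `{p,q}`. -/
def join {N : ℕ} (p q : Fin N) (g : Fin N → Fin N) : Fin N → Fin N :=
  fun x => if x = p then q else if x = q then p else g x

/-- Remove the chord `{p,q}`. -/
def cut {N : ℕ} (p q : Fin N) (g : Fin N → Fin N) : Fin N → Fin N :=
  fun x => if x = p then p else if x = q then q else g x

/-- `V` without `p`, `q`. -/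
def rem {N : ℕ} (V : Finset (Fin N)) (p q : Fin N) : Finset (Fin N) := (V.erase p).erase q

lemma mem_rem {N : ℕ} {V : Finset (Fin N)} {p q x : Fin N} :
    x ∈ rem V p q ↔ x ≠ p ∧ x ≠ q ∧ x ∈ V := by
  simp [rem]; tauto

lemma card_rem {N : ℕ} {V : Finset (Fin N)} {p q : Fin N} (hp : p ∈ V) (hq : q ∈ V) (h : p ≠ q) :
    (rem V p q).card + 2 = V.card := by
  unfold rem
  have hq' : q ∈ V.erase p := by simp [hq, h.symm]
  have h1 := Finset.card_erase_add_one hq'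
  have h2 := Finset.card_erase_add_one hp
  omega

lemma join_apply_of_ne {N : ℕ} {p q x : Fin N} {g : Fin N → Fin N} (h1 : x ≠ p) (h2 : x ≠ q) :
    join p q g x = g x := by simp [join, h1, h2]

lemma sum_fix {N : ℕ} {V : Finset (Fin N)} {p q : Fin N} (hp : p ∈ V) (hq : q ∈ V) (h : p ≠ q)
    (F : (Fin N → Fin N) → ℝ) :
    ∑ f ∈ (MM V).filter (fun f => f p = q), F f = ∑ g ∈ MM (rem V p q), F (join p q g) := by
  symm
  apply Finset.sum_nbij' (join p q) (cut p q)
  · intro g hg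
    rw [mem_MM] at hg
    obtain ⟨h1, h2⟩ := hg
    simp only [mem_rem] at h2
    rw [Finset.mem_filter, mem_MM]
    refine ⟨⟨?_, ?_⟩, ?_⟩
    · intro x
      have := h1 x; have := h2 x; have := h2 p; have := h2 q
      grind [join]
    · intro x
      have := h1 x; have := h2 x; have := h2 p; have := h2 q
      grind [join]
    · simp [join]
  · intro f hf
    rw [Finset.mem_filter, mem_MM] at hf
    obtain ⟨⟨h1, h2⟩, h3⟩ := hf
    rw [mem_MM]
    simp only [mem_rem]
    refine ⟨?_, ?_⟩
    · intro x
      have := h1 x; have := h2 x; have := h1 p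
      grind [cut]
    · intro x
      have := h1 x; have := h2 x; have := h1 p
      grind [cut]
  · intro g hg
    rw [mem_MM] at hg
    obtain ⟨h1, h2⟩ := hg
    simp only [mem_rem] at h2
    funext x
    have := h1 x; have := h2 x; have := h2 p; have := h2 q
    grind [join, cut]
  · intro f hf
    rw [Finset.mem_filter, mem_MM] at hf
    obtain ⟨⟨h1, h2⟩, h3⟩ := hf
    funext x
    have := h1 x; have := h2 x; have := h1 p
    grind [join, cut]
  · intros; rfl

lemma sum_MM {N : ℕ} {V : Finset (Fin N)} {p : Fin N} (hp : p ∈ V)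
    (F : (Fin N → Fin N) → ℝ) :
    ∑ f ∈ MM V, F f = ∑ q ∈ V.erase p, ∑ g ∈ MM (rem V p q), F (join p q g) := by
  have hmap : ∀ f ∈ MM V, f p ∈ V.erase p := by
    intro f hf
    rw [mem_MM] at hf
    obtain ⟨h1, h2⟩ := hf
    have := h1 p; have := h2 p; have := h2 (f p)
    grind
  rw [← Finset.sum_fiberwise_of_maps_to hmap]
  apply Finset.sum_congr rfl
  intro q hq
  rw [Finset.mem_erase] at hq
  rw [sum_fix hp hq.2 hq.1.symm]

/-- Number of matchings of `2m` points. -/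
def dm : ℕ → ℕ
  | 0 => 1
  | m + 1 => (2 * m + 1) * dm m

lemma dm_pos (m : ℕ) : 0 < dm m := by
  induction m with
  | zero => simp [dm]
  | succ m ih => simp only [dm]; positivity

lemma card_MM {N : ℕ} : ∀ (m : ℕ) (V : Finset (Fin N)), V.card = 2 * m →
    ((MM V).card : ℝ) = dm m := by
  intro m
  induction m with
  | zero =>
    intro V hV
    have : V = ∅ := by simpa using hV
    subst this
    have : MM (∅ : Finset (Fin N)) = {id} := by
      ext f
      rw [mem_MM, Finset.mem_singleton]
      constructor
      · rintro ⟨_, h⟩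
        funext x
        have := h x
        simpa using this
      · rintro rfl
        simp
    simp [this, dm]
  | succ m ih =>
    intro V hV
    have hne : V.Nonempty := by
      rw [← Finset.card_pos]; omega
    obtain ⟨p, hp⟩ := hne
    have h := sum_MM hp (fun _ => (1:ℝ))
    simp only [Finset.sum_const, nsmul_eq_mul, mul_one] at h
    rw [h]
    have : ∀ q ∈ V.erase p, ((MM (rem V p q)).card : ℝ) = dm m := by
      intro q hq
      rw [Finset.mem_erase] at hq
      apply ih
      have := card_rem hp hq.2 hq.1.symm
      omega
    rw [Finset.sum_congr rfl this]
    simp only [Finset.sum_const, nsmul_eq_mul, dm, Finset.card_erase_of_mem hp, hV]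
    push_cast
    congr 1
    have : 2 * (m+1) - 1 = 2 * m + 1 := by omega
    rw [this]; push_cast; ring

/-- Probability of containing prescribed disjoint chords. -/
lemma count_fixed {N : ℕ} {ι : Type*} (s : ι → Fin N × Fin N) (I : Finset ι) :
    ∀ (m : ℕ) (V : Finset (Fin N)), V.card = 2 * m →
    (∀ k ∈ I, (s k).1 ≠ (s k).2 ∧ (s k).1 ∈ V ∧ (s k).2 ∈ V) →
    (∀ k ∈ I, ∀ l ∈ I, k ≠ l → (s k).1 ≠ (s l).1 ∧ (s k).1 ≠ (s l).2 ∧ (s k).2 ≠ (s l).1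
      ∧ (s k).2 ≠ (s l).2) →
    I.card ≤ m ∧ ((((MM V).filter (fun f => ∀ k ∈ I, f (s k).1 = (s k).2)).card : ℕ) : ℝ)
      = dm (m - I.card) := by
  induction I using Finset.induction_on with
  | empty =>
    intro m V hV _ _
    simp [card_MM m V hV]
  | insert a I ha ih =>
    intro m V hV h1 h2
    obtain ⟨ha1, ha2, ha3⟩ := h1 a (by simp)
    have hc := card_rem ha2 ha3 ha1
    obtain ⟨m, rfl⟩ : ∃ m', m = m' + 1 := ⟨m - 1, by omega⟩
    have := ih m (rem V (s a).1 (s a).2) (by omega) (by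
      intro k hk
      have := h1 k (by simp [hk])
      have := h2 k (by simp [hk]) a (by simp) (by rintro rfl; exact ha hk)
      simp only [mem_rem]
      tauto) (by
      intro k hk l hl hkl
      exact h2 k (by simp [hk]) l (by simp [hl]) hkl)
    rw [Finset.card_insert_of_notMem ha]
    refine ⟨by omega, ?_⟩
    have e : m + 1 - (I.card + 1) = m - I.card := by omega
    rw [e, ← this.2]
    have hs := sum_fix ha2 ha3 ha1 (fun f => if ∀ k ∈ I, f (s k).1 = (s k).2 then (1:ℝ) else 0)
    rw [← Finset.sum_filter, Finset.filter_filter] at hs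
    simp only [Finset.sum_const, nsmul_eq_mul, mul_one] at hs
    have e2 : (MM V).filter (fun f => ∀ k ∈ insert a I, f (s k).1 = (s k).2) =
      (MM V).filter (fun f => f (s a).1 = (s a).2 ∧ ∀ k ∈ I, f (s k).1 = (s k).2) := by
      apply Finset.filter_congr
      intro f _
      simp
    rw [e2, hs, Finset.card_filter]
    push_cast
    apply Finset.sum_congr rfl
    intro g _
    congr 1
    apply propext
    apply forall₂_congr
    intro k hk
    have := h2 k (by simp [hk]) a (by simp) (by rintro rfl; exact ha hk)
    rw [join_apply_of_ne this.1 this.2.1]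

/-- Number of points of `A` matched into `B`. -/
def NAB {N : ℕ} (A B : Finset (Fin N)) (f : Fin N → Fin N) : ℕ :=
  (A.filter fun p => f p ∈ B).card

/-- Exponential moment bound. -/
lemma mgf_bound {N : ℕ} (η ρ : ℝ) (hη : 0 ≤ η) (hη1 : η ≤ 4/5) (hρ : ρ = 1 - η / 4) :
    ∀ (m : ℕ) (V A B : Finset (Fin N)), V.card = 2 * m → A ⊆ V → B ⊆ V → Disjoint A B →
    (A.card : ℝ) + 2 * η * m ≤ B.card →
    ∑ f ∈ MM V, (3/4 : ℝ) ^ (NAB A B f) ≤ ρ ^ A.card * dm m := by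
  have hρ0 : 4/5 ≤ ρ := by rw [hρ]; linarith
  have hρ1 : ρ ≤ 1 := by rw [hρ]; linarith
  intro m
  induction m with
  | zero =>
    intro V A B hV hA hB hd hAB
    have : V = ∅ := by simpa using hV
    subst this
    have : A = ∅ := by simpa using hA
    subst this
    have := card_MM 0 (∅ : Finset (Fin N)) (by simp)
    simp [NAB, this]
  | succ m ih =>
    intro V A B hV hA hB hd hAB
    rcases A.eq_empty_or_nonempty with rfl | ⟨p, hp⟩
    · have := card_MM (m+1) V hV
      simp [NAB, this]
    · have hpV := hA hp
      rw [sum_MM hpV]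
      obtain ⟨a, ha⟩ : ∃ a, A.card = a + 1 := ⟨A.card - 1, by
        have : 0 < A.card := Finset.card_pos.mpr ⟨p, hp⟩
        omega⟩
      set w : Fin N → ℝ := fun q => if q ∈ A then ρ⁻¹ else if q ∈ B then 3/4 else 1 with hw
      have hpB : p ∉ B := Finset.disjoint_left.mp hd hp
      have key : ∀ q ∈ V.erase p, ∑ g ∈ MM (rem V p q), (3/4:ℝ) ^ NAB A B (join p q g) ≤
          w q * (ρ ^ a * dm m) := by
        intro q hq
        rw [Finset.mem_erase] at hq
        have hcr := card_rem hpV hq.2 hq.1.symm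
        have hVr : (rem V p q).card = 2 * m := by omega
        have hAr : (A.erase p).erase q ⊆ rem V p q := by
          intro x hx
          simp only [Finset.mem_erase] at hx
          rw [mem_rem]; exact ⟨hx.2.1, hx.1, hA hx.2.2⟩
        have hBr : B.erase q ⊆ rem V p q := by
          intro x hx
          simp only [Finset.mem_erase] at hx
          rw [mem_rem]; exact ⟨fun h => hpB (h ▸ hx.2), hx.1, hB hx.2⟩
        have hdr : Disjoint ((A.erase p).erase q) (B.erase q) := by
          rw [Finset.disjoint_left] at hd ⊢
          intro x hx hx2
          simp only [Finset.mem_erase] at hx hx2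
          exact hd hx.2.2 hx2.2
        have hih := ih (rem V p q) ((A.erase p).erase q) (B.erase q) hVr hAr hBr hdr
        have hcard1 := Finset.card_erase_of_mem hp
        by_cases hqA : q ∈ A
        · have hqB : q ∉ B := Finset.disjoint_left.mp hd hqA
          have hqA' : q ∈ A.erase p := by simp [hq.1, hqA]
          have hcard2 := Finset.card_erase_add_one hqA'
          have hcA : ((A.erase p).erase q).card + 1 = a := by omega
          have hwq : w q = ρ⁻¹ := by simp [hw, hqA]
          rw [hwq]
          have h1 : ρ⁻¹ * (ρ ^ a * dm m) = ρ ^ ((A.erase p).erase q).card * dm m := by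
            rw [← hcA, pow_succ]
            have : ρ ≠ 0 := by linarith
            field_simp
          rw [h1]
          refine le_trans (Finset.sum_le_sum ?_) (hih ?_)
          · intro g _
            apply pow_le_pow_of_le_one (by norm_num) (by norm_num)
            apply Finset.card_le_card
            intro x hx
            simp only [Finset.mem_filter, Finset.mem_erase] at hx ⊢
            rw [join_apply_of_ne hx.1.2.1 hx.1.1]
            exact ⟨hx.1.2.2, hx.2.2⟩
          · rw [Finset.erase_eq_of_notMem hqB]
            have : (A.card : ℝ) = ((A.erase p).erase q).card + 2 := by
              rw [ha, ← hcA]; push_cast; ring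
            push_cast at hAB
            nlinarith
        · have hqA' : q ∉ A.erase p := by simp [hqA]
          rw [Finset.erase_eq_of_notMem hqA'] at hih
          have hcA : (A.erase p).card = a := by omega
          rw [hcA] at hih
          by_cases hqB : q ∈ B
          · have hwq : w q = 3/4 := by simp [hw, hqA, hqB]
            rw [hwq]
            have hcB := Finset.card_erase_add_one hqB
            refine le_trans (Finset.sum_le_sum (g := fun g => (3/4:ℝ) * (3/4:ℝ) ^ NAB (A.erase p) (B.erase q) g) ?_) ?_
            · intro g _
              rw [← pow_succ']
              apply pow_le_pow_of_le_one (by norm_num) (by norm_num)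
              have : insert p ((A.erase p).filter fun x => g x ∈ B.erase q) ⊆
                  A.filter fun x => join p q g x ∈ B := by
                intro x hx
                simp only [Finset.mem_insert, Finset.mem_filter, Finset.mem_erase] at hx ⊢
                rcases hx with rfl | hx
                · simp [hp, join, hqB]
                · rw [join_apply_of_ne hx.1.1 (by rintro rfl; exact hqA hx.1.2)]
                  exact ⟨hx.1.2, hx.2.2⟩
              have h3 := Finset.card_le_card this
              rw [Finset.card_insert_of_notMem (by simp)] at h3
              exact h3
            · rw [← Finset.mul_sum]
              apply mul_le_mul_of_nonneg_left _ (by norm_num)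
              apply hih
              have : (B.card : ℝ) = (B.erase q).card + 1 := by rw [← hcB]; push_cast; ring
              rw [ha] at hAB
              push_cast at hAB
              nlinarith
          · have hwq : w q = 1 := by simp [hw, hqA, hqB]
            rw [hwq, one_mul]
            rw [Finset.erase_eq_of_notMem hqB] at hih
            refine le_trans (Finset.sum_le_sum ?_) (hih ?_)
            · intro g _
              apply pow_le_pow_of_le_one (by norm_num) (by norm_num)
              apply Finset.card_le_card
              intro x hx
              simp only [Finset.mem_filter, Finset.mem_erase] at hx ⊢
              rw [join_apply_of_ne hx.1.1 (by rintro rfl; exact hqA hx.1.2)]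
              exact ⟨hx.1.2, hx.2⟩
            · rw [ha] at hAB
              push_cast at hAB
              nlinarith
      refine le_trans (Finset.sum_le_sum key) ?_
      rw [← Finset.sum_mul]
      -- sum of weights
      have hw2 : ∀ q, w q = 1 + (if q ∈ A then (ρ⁻¹ - 1) else 0) + (if q ∈ B then (-1/4) else 0) := by
        intro q
        simp only [hw]
        by_cases hqA : q ∈ A
        · have hqB : q ∉ B := Finset.disjoint_left.mp hd hqA
          simp [hqA, hqB]
        · by_cases hqB : q ∈ B
          · simp [hqA, hqB]; norm_num
          · simp [hqA, hqB]
      have hsum : ∑ q ∈ V.erase p, w q = (2 * m + 1) + a * (ρ⁻¹ - 1) - B.card / 4 := by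
        simp only [hw2, Finset.sum_add_distrib]
        rw [← Finset.sum_filter, ← Finset.sum_filter]
        have e1 : (V.erase p).filter (fun q => q ∈ A) = A.erase p := by
          ext x; simp only [Finset.mem_filter, Finset.mem_erase]
          constructor
          · tauto
          · intro h; exact ⟨⟨h.1, hA h.2⟩, h.2⟩
        have e2 : (V.erase p).filter (fun q => q ∈ B) = B := by
          ext x; simp only [Finset.mem_filter, Finset.mem_erase]
          constructor
          · tauto
          · intro h; exact ⟨⟨fun h' => hpB (h' ▸ h), hB h⟩, h⟩
        have e3 : (V.erase p).card = 2 * m + 1 := by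
          rw [Finset.card_erase_of_mem hpV]; omega
        have e4 : (A.erase p).card = a := by rw [Finset.card_erase_of_mem hp]; omega
        rw [e1, e2]
        simp only [Finset.sum_const, nsmul_eq_mul, e3, e4]
        push_cast; ring
      have hle : ∑ q ∈ V.erase p, w q ≤ ρ * (2 * m + 1) := by
        rw [hsum]
        have hinv : ρ⁻¹ ≤ 5/4 := by
          rw [inv_le_comm₀ (by linarith) (by norm_num)]
          norm_num; linarith
        rw [ha] at hAB
        push_cast at hAB
        have : (a:ℝ) * (ρ⁻¹ - 1) ≤ a * (1/4) := mul_le_mul_of_nonneg_left (by linarith) (by positivity)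
        have hm : (0:ℝ) ≤ m := by positivity
        have e5 : ρ * (2 * m + 1) = 2 * m + 1 - η / 4 * (2 * m + 1) := by rw [hρ]; ring
        rw [e5]
        nlinarith
      calc (∑ q ∈ V.erase p, w q) * (ρ ^ a * dm m) ≤ (ρ * (2 * m + 1)) * (ρ ^ a * dm m) := by
            apply mul_le_mul_of_nonneg_right hle
            have : 0 ≤ ρ := by linarith
            positivity
        _ = ρ ^ A.card * dm (m+1) := by
            rw [ha, pow_succ]; simp only [dm]; push_cast; ring

end Chord


open scoped Classical
open Finset Filter

namespace Chord

/-- Coin configurations. -/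
abbrev Om (N : ℕ) := Fin N → Fin N → Bool

/-- Expectation over the coins. -/
noncomputable def Eo {N : ℕ} (g : Om N → ℝ) : ℝ := (∑ ω, g ω) / (Fintype.card (Om N) : ℝ)

/-- Indicator. -/
noncomputable def ind (P : Prop) : ℝ := if P then 1 else 0

lemma ind_nonneg (P : Prop) : 0 ≤ ind P := by unfold ind; split_ifs <;> norm_num
lemma ind_le_one (P : Prop) : ind P ≤ 1 := by unfold ind; split_ifs <;> norm_num
lemma ind_true {P : Prop} (h : P) : ind P = 1 := by simp [ind, h]
lemma ind_false {P : Prop} (h : ¬ P) : ind P = 0 := by simp [ind, h]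
lemma ind_mono {P Q : Prop} (h : P → Q) : ind P ≤ ind Q := by
  by_cases hP : P
  · rw [ind_true hP, ind_true (h hP)]
  · rw [ind_false hP]; exact ind_nonneg Q
lemma ind_and (P Q : Prop) : ind (P ∧ Q) = ind P * ind Q := by
  by_cases hP : P <;> by_cases hQ : Q <;> simp [ind, hP, hQ]
lemma ind_not (P : Prop) : ind (¬ P) = 1 - ind P := by
  by_cases hP : P <;> simp [ind, hP]
lemma ind_or_le (P Q : Prop) : ind (P ∨ Q) ≤ ind P + ind Q := by
  by_cases hP : P <;> by_cases hQ : Q <;> simp [ind, hP, hQ]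
lemma ind_forall {ι : Type*} (T : Finset ι) (P : ι → Prop) :
    ind (∀ t ∈ T, P t) = ∏ t ∈ T, ind (P t) := by
  by_cases h : ∀ t ∈ T, P t
  · rw [ind_true h]; symm; apply Finset.prod_eq_one; intro t ht; exact ind_true (h t ht)
  · rw [ind_false h]; push Not at h; obtain ⟨t, ht, hP⟩ := h
    exact (Finset.prod_eq_zero ht (ind_false hP)).symm

lemma card_Om_pos (N : ℕ) : (0:ℝ) < (Fintype.card (Om N) : ℝ) := by
  exact_mod_cast Fintype.card_pos

lemma Eo_const {N : ℕ} (c : ℝ) : Eo (fun _ : Om N => c) = c := by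
  have := card_Om_pos N
  unfold Eo
  rw [Finset.sum_const, nsmul_eq_mul, Finset.card_univ]
  field_simp

lemma Eo_add {N : ℕ} (f g : Om N → ℝ) : Eo (fun ω => f ω + g ω) = Eo f + Eo g := by
  unfold Eo; rw [Finset.sum_add_distrib, add_div]

lemma Eo_sub {N : ℕ} (f g : Om N → ℝ) : Eo (fun ω => f ω - g ω) = Eo f - Eo g := by
  unfold Eo; rw [Finset.sum_sub_distrib, sub_div]

lemma Eo_mono {N : ℕ} {f g : Om N → ℝ} (h : ∀ ω, f ω ≤ g ω) : Eo f ≤ Eo g := by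
  unfold Eo
  exact div_le_div_of_nonneg_right (Finset.sum_le_sum fun ω _ => h ω) (card_Om_pos N).le

lemma Eo_congr {N : ℕ} {f g : Om N → ℝ} (h : ∀ ω, f ω = g ω) : Eo f = Eo g := by
  congr 1; funext ω; exact h ω

/-- `g` depends only on the coins of the unordered pairs in `J`. -/
def Dep {N : ℕ} (g : Om N → ℝ) (J : Set (Sym2 (Fin N))) : Prop :=
  ∀ ω ω' : Om N, (∀ a b, s(a, b) ∈ J → ω a b = ω' a b) → g ω = g ω'

/-- Mix two configurations. -/
noncomputable def mix {N : ℕ} (J : Set (Sym2 (Fin N))) (ω ω' : Om N) : Om N :=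
  fun a b => if s(a, b) ∈ J then ω a b else ω' a b

lemma Dep.mono {N : ℕ} {g : Om N → ℝ} {J J' : Set (Sym2 (Fin N))} (h : Dep g J) (hJ : J ⊆ J') :
    Dep g J' := fun ω ω' hh => h ω ω' fun a b hab => hh a b (hJ hab)

lemma Dep.mul {N : ℕ} {f g : Om N → ℝ} {J : Set (Sym2 (Fin N))} (hf : Dep f J)
    (hg : Dep g J) : Dep (fun ω => f ω * g ω) J := by
  intro ω ω' h
  simp only
  rw [hf ω ω' h, hg ω ω' h]

lemma Eo_mul {N : ℕ} {f g : Om N → ℝ} {J J' : Set (Sym2 (Fin N))} (hf : Dep f J)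
    (hg : Dep g J') (hd : Disjoint J J') : Eo (fun ω => f ω * g ω) = Eo f * Eo g := by
  have key : (∑ ω, f ω) * (∑ ω, g ω) = (Fintype.card (Om N) : ℝ) * ∑ ω, f ω * g ω := by
    rw [Finset.sum_mul_sum, ← Finset.sum_product']
    have e : ∑ x : Om N × Om N, f x.1 * g x.2 = ∑ x : Om N × Om N, f x.1 * g x.1 := by
      apply Finset.sum_nbij' (fun x => (mix J x.1 x.2, mix J x.2 x.1))
        (fun x => (mix J x.1 x.2, mix J x.2 x.1))
      · intros; simp
      · intros; simp
      · rintro ⟨x, y⟩ _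
        ext a b <;> simp only [mix] <;> split_ifs <;> rfl
      · rintro ⟨x, y⟩ _
        ext a b <;> simp only [mix] <;> split_ifs <;> rfl
      · rintro ⟨x, y⟩ _
        simp only
        congr 1
        · apply hf; intro a b hab; simp [mix, hab]
        · apply hg; intro a b hab
          have : s(a, b) ∉ J := fun h => Set.disjoint_left.mp hd h hab
          simp [mix, this]
    rw [Finset.univ_product_univ, e, ← Finset.univ_product_univ, Finset.sum_product]
    simp only [Finset.sum_const, nsmul_eq_mul, Finset.card_univ]
    rw [Finset.mul_sum]
  have := card_Om_pos N
  unfold Eo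
  rw [div_mul_div_comm, key]
  field_simp

lemma Eo_prod {N : ℕ} {ι : Type*} (T : Finset ι) (f : ι → Om N → ℝ) (J : ι → Set (Sym2 (Fin N)))
    (hf : ∀ t ∈ T, Dep (f t) (J t)) (hd : ∀ t ∈ T, ∀ u ∈ T, t ≠ u → Disjoint (J t) (J u)) :
    Eo (fun ω => ∏ t ∈ T, f t ω) = ∏ t ∈ T, Eo (f t) := by
  have : Eo (fun ω => ∏ t ∈ T, f t ω) = ∏ t ∈ T, Eo (f t) ∧
    Dep (fun ω => ∏ t ∈ T, f t ω) (⋃ t ∈ T, J t) := by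
    induction T using Finset.induction_on with
    | empty => 
      refine ⟨by simp [Eo_const], ?_⟩
      intro ω ω' _; simp
    | insert a T ha ih =>
      obtain ⟨h1, h2⟩ := ih (fun t ht => hf t (by simp [ht]))
        (fun t ht u hu => hd t (by simp [ht]) u (by simp [hu]))
      simp only [Finset.prod_insert ha]
      have hfa := hf a (by simp)
      constructor
      · rw [← h1]
        apply Eo_mul hfa h2
        rw [Set.disjoint_iUnion₂_right]
        intro t ht
        exact hd a (by simp) t (by simp [ht]) (by rintro rfl; exact ha ht)
      · apply Dep.mul
        · apply hfa.mono
          intro x hx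
          simp only [Set.mem_iUnion]
          exact ⟨a, by simp, hx⟩
        · apply h2.mono
          intro x hx
          simp only [Set.mem_iUnion] at hx ⊢
          obtain ⟨t, ht, hx⟩ := hx
          exact ⟨t, by simp [ht], hx⟩
  exact this.1

/-- rep `a` over-crosses rep `b` (given they cross). -/
def ov {N : ℕ} (ω : Om N) (a b : Fin N) : Prop :=
  (a ≤ b ∧ ω a b = true) ∨ (b < a ∧ ω b a = false)

lemma ov_symm {N : ℕ} (ω : Om N) {a b : Fin N} (h : a ≠ b) : ov ω b a ↔ ¬ ov ω a b := by
  unfold ov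
  rcases lt_or_gt_of_ne h with h | h
  · simp [h.le, h, not_le.mpr h, not_lt.mpr h.le]
  · simp [h.le, h, not_le.mpr h, not_lt.mpr h.le]

lemma Dep_ov {N : ℕ} (a b : Fin N) : Dep (fun ω => ind (ov ω a b)) {s(a, b)} := by
  intro ω ω' h
  have h1 := h a b rfl
  have h2 := h b a Sym2.eq_swap
  simp [ov, h1, h2]

lemma Eo_ov {N : ℕ} {a b : Fin N} (h : a ≠ b) : Eo (fun ω => ind (ov ω a b)) = 1/2 := by
  have h1 : ∑ ω : Om N, ind (ov ω b a) = ∑ ω : Om N, ind (ov ω a b) := by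
    apply Finset.sum_nbij' (fun ω x y => ! ω x y) (fun ω x y => ! ω x y)
    · intros; simp
    · intros; simp
    · intros; funext; simp
    · intros; funext; simp
    · intro ω _
      congr 1
      rw [ov_symm ω h]
      unfold ov
      rcases lt_or_gt_of_ne h with h | h
      · simp [h.le, not_lt.mpr h.le]
      · simp [h, not_le.mpr h]
  have h2 : Eo (fun ω => ind (ov ω b a)) = Eo (fun ω => ind (ov ω a b)) := by
    unfold Eo; rw [h1]
  have h3 : Eo (fun ω => ind (ov ω b a)) = 1 - Eo (fun ω => ind (ov ω a b)) := by
    rw [← Eo_const (N := N) 1, ← Eo_sub]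
    apply Eo_congr
    intro ω
    rw [ov_symm ω h, ind_not]
  linarith

lemma Eo_all_ov {N : ℕ} {ι : Type*} (T : Finset ι) (a b : ι → Fin N) (h : ∀ t ∈ T, a t ≠ b t)
    (hinj : ∀ t ∈ T, ∀ u ∈ T, t ≠ u → s(a t, b t) ≠ s(a u, b u)) :
    Eo (fun ω => ind (∀ t ∈ T, ov ω (a t) (b t))) = (1/2) ^ T.card := by
  simp only [ind_forall]
  rw [Eo_prod T (fun t ω => ind (ov ω (a t) (b t))) (fun t => {s(a t, b t)})]
  · rw [Finset.prod_congr rfl (fun t ht => Eo_ov (h t ht))]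
    simp
  · intro t _; exact Dep_ov _ _
  · intro t ht u hu htu
    rw [Set.disjoint_singleton]
    exact hinj t ht u hu htu

lemma Eo_nopath {N : ℕ} {ι : Type*} (T : Finset ι) (r : ι → Fin N) (x y : Fin N) (hxy : x ≠ y)
    (hx : ∀ t ∈ T, r t ≠ x) (hy : ∀ t ∈ T, r t ≠ y)
    (hinj : ∀ t ∈ T, ∀ u ∈ T, t ≠ u → r t ≠ r u) :
    Eo (fun ω => ind (∀ t ∈ T, ¬ (ov ω x (r t) ∧ ov ω (r t) y))) = (3/4) ^ T.card := by
  simp only [ind_forall]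
  rw [Eo_prod T (fun t ω => ind (¬ (ov ω x (r t) ∧ ov ω (r t) y)))
    (fun t => {s(x, r t), s(r t, y)})]
  · have : ∀ t ∈ T, Eo (fun ω => ind (¬ (ov ω x (r t) ∧ ov ω (r t) y))) = 3/4 := by
      intro t ht
      simp only [ind_not, ind_and]
      rw [Eo_sub, Eo_const, Eo_mul (Dep_ov _ _) (Dep_ov _ _), Eo_ov (hx t ht).symm, Eo_ov (hy t ht)]
      · norm_num
      · rw [Set.disjoint_singleton]
        have := hx t ht; have := hy t ht
        simp only [ne_eq, Sym2.eq_iff]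
        grind
    rw [Finset.prod_congr rfl this, Finset.prod_const]
  · intro t _ ω ω' h
    have h1 := Dep_ov x (r t) ω ω' (fun a b hab => h a b (by
      simp only [Set.mem_singleton_iff] at hab; rw [hab]; simp))
    have h2 := Dep_ov (r t) y ω ω' (fun a b hab => h a b (by
      simp only [Set.mem_singleton_iff] at hab; rw [hab]; simp))
    simp only [ind_not, ind_and]
    simp only at h1 h2
    rw [h1, h2]
  · intro t ht u hu htu
    have := hx t ht; have := hy t ht; have := hx u hu; have := hy u hu
    have := hinj t ht u hu htu
    rw [Set.disjoint_left]
    intro e he he'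
    simp only [Set.mem_insert_iff, Set.mem_singleton_iff] at he he'
    rcases he with rfl | rfl <;> rcases he' with h | h <;> rw [Sym2.eq_iff] at h <;> grind

/-- weight of an arc with `c` interior points. -/
noncomputable def wt (c : ℕ) : ℝ := if c = 0 then 1 else 2 * (1/2) ^ c

lemma wt_nonneg (c : ℕ) : 0 ≤ wt c := by unfold wt; split_ifs <;> positivity
lemma wt_le_one (c : ℕ) : wt c ≤ 1 := by
  unfold wt; split_ifs with h
  · exact le_rfl
  · obtain ⟨k, rfl⟩ := Nat.exists_eq_succ_of_ne_zero h
    rw [Nat.succ_eq_add_one, pow_succ]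
    have : ((1:ℝ)/2)^k ≤ 1 := pow_le_one₀ (by norm_num) (by norm_num)
    linarith

/-- Extreme event: all over or all under. -/
def Ext {N : ℕ} {ι : Type*} (ω : Om N) (T : Finset ι) (r : ι → Fin N) (x : Fin N) : Prop :=
  (∀ t ∈ T, ov ω x (r t)) ∨ (∀ t ∈ T, ov ω (r t) x)

lemma Eo_ext {N : ℕ} {ι : Type*} (T : Finset ι) (r : ι → Fin N) (x : Fin N)
    (hx : ∀ t ∈ T, r t ≠ x) (hinj : ∀ t ∈ T, ∀ u ∈ T, t ≠ u → r t ≠ r u) :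
    Eo (fun ω => ind (Ext ω T r x)) = wt T.card := by
  rcases T.eq_empty_or_nonempty with rfl | ⟨t0, ht0⟩
  · simp [Ext, wt, ind, Eo_const]
  · have : T.card ≠ 0 := by
      have : 0 < T.card := Finset.card_pos.mpr ⟨t0, ht0⟩
      omega
    rw [wt, if_neg this]
    have h1 : ∀ ω : Om N, ind (Ext ω T r x) = ind (∀ t ∈ T, ov ω x (r t)) + ind (∀ t ∈ T, ov ω (r t) x) := by
      intro ω
      unfold Ext
      by_cases hP : ∀ t ∈ T, ov ω x (r t)
      · have hQ : ¬ ∀ t ∈ T, ov ω (r t) x := by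
          intro hQ
          exact (ov_symm ω (hx t0 ht0)).mp (hP t0 ht0) (hQ t0 ht0)
        rw [ind_true hP, ind_false hQ, ind_true (Or.inl hP)]; norm_num
      · by_cases hQ : ∀ t ∈ T, ov ω (r t) x
        · rw [ind_false hP, ind_true hQ, ind_true (Or.inr hQ)]; norm_num
        · rw [ind_false hP, ind_false hQ, ind_false (by tauto)]; norm_num
    rw [Eo_congr h1, Eo_add, Eo_all_ov T (fun _ => x) r, Eo_all_ov T r (fun _ => x)]
    · ring
    · exact hx
    · intro t ht u hu htu
      have := hx t ht; have := hx u hu; have := hinj t ht u hu htu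
      simp only [ne_eq, Sym2.eq_iff]; grind
    · intro t ht; exact (hx t ht).symm
    · intro t ht u hu htu
      have := hx t ht; have := hx u hu; have := hinj t ht u hu htu
      simp only [ne_eq, Sym2.eq_iff]; grind

lemma Dep_ext {N : ℕ} {ι : Type*} (T : Finset ι) (r : ι → Fin N) (x : Fin N) :
    Dep (fun ω => ind (Ext ω T r x)) {e | ∃ t ∈ T, e = s(x, r t)} := by
  intro ω ω' h
  have h1 : ∀ t ∈ T, ω x (r t) = ω' x (r t) := fun t ht => h _ _ ⟨t, ht, rfl⟩
  have h2 : ∀ t ∈ T, ω (r t) x = ω' (r t) x := fun t ht => h _ _ ⟨t, ht, Sym2.eq_swap⟩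
  simp only [Ext]
  congr 2
  · apply propext; apply forall₂_congr; intro t ht; simp [ov, h1 t ht, h2 t ht]
  · apply propext; apply forall₂_congr; intro t ht; simp [ov, h1 t ht, h2 t ht]

end Chord


open scoped Classical
open Finset Filter

namespace Chord

lemma tendsto_approx {a : ℕ → ℝ} {A : ℝ}
    (h : ∀ ε > 0, ∃ b c : ℕ → ℝ, ∃ B C : ℝ, Tendsto b atTop (nhds B) ∧ Tendsto c atTop (nhds C) ∧
      |B - A| ≤ ε ∧ C ≤ ε ∧ ∀ᶠ n in atTop, |a n - b n| ≤ c n) : Tendsto a atTop (nhds A) := by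
  rw [Metric.tendsto_atTop]
  intro ε hε
  obtain ⟨b, c, B, C, hb, hc, hB, hC, he⟩ := h (ε/8) (by positivity)
  have h1 := (Metric.tendsto_nhds.mp hb) (ε/8) (by positivity)
  have h2 := (Metric.tendsto_nhds.mp hc) (ε/8) (by positivity)
  obtain ⟨N, hN⟩ := eventually_atTop.mp (h1.and (h2.and he))
  refine ⟨N, fun n hn => ?_⟩
  obtain ⟨h1, h2, h3⟩ := hN n hn
  rw [Real.dist_eq] at *
  rw [abs_lt] at h1 h2 ⊢
  rw [abs_le] at hB h3
  constructor <;> linarith [h1.1, h1.2, h2.1, h2.2, hB.1, hB.2, h3.1, h3.2]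

lemma choose_err (x m L : ℕ) :
    |ind (x = m) - ∑ k ∈ range (L+1), (-1:ℝ)^k * ((m+k).choose m : ℝ) * (x.choose (m+k) : ℝ)| ≤
      ((m+L+1).choose m : ℝ) * (x.choose (m+L+1) : ℝ) := by
  have e : ∀ k, ((m+k).choose m : ℝ) * (x.choose (m+k) : ℝ) = (x.choose m : ℝ) * ((x-m).choose k : ℝ) := by
    intro k
    have := Nat.choose_mul (n := x) (k := m+k) (s := m) (by omega)
    rw [Nat.add_sub_cancel_left] at this
    rw [mul_comm]
    exact_mod_cast this
  have e2 : ∑ k ∈ range (L+1), (-1:ℝ)^k * ((m+k).choose m : ℝ) * (x.choose (m+k) : ℝ) =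
      (x.choose m : ℝ) * ∑ k ∈ range (L+1), (-1:ℝ)^k * ((x-m).choose k : ℝ) := by
    rw [Finset.mul_sum]
    apply Finset.sum_congr rfl
    intro k _
    rw [mul_assoc, e]; ring
  rw [e2]
  have e3 : ((m+L+1).choose m : ℝ) * (x.choose (m+L+1) : ℝ) =  (x.choose m : ℝ) * ((x-m).choose (L+1) : ℝ) := e (L+1)
  rw [e3]
  rcases lt_trichotomy x m with h | h | h
  · rw [Nat.choose_eq_zero_of_lt h, ind_false (by omega)]; simp
  · subst h
    rw [ind_true rfl]
    simp only [Nat.sub_self, Nat.choose_self]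
    rw [Finset.sum_range_succ']
    simp
  · rw [ind_false (by omega)]
    obtain ⟨y, hy⟩ : ∃ y, x - m = y + 1 := ⟨x - m - 1, by omega⟩
    rw [hy]
    have := Int.alternating_sum_range_choose_eq_choose (n := y) (m := L)
    have h4 : ∑ k ∈ range (L+1), (-1:ℝ)^k * ((y+1).choose k : ℝ) = (-1:ℝ)^L * (y.choose L : ℝ) := by
      exact_mod_cast this
    rw [h4, zero_sub, abs_neg, abs_mul, abs_mul, abs_pow, abs_neg, abs_one, one_pow, one_mul,
      Nat.abs_cast, Nat.abs_cast]
    apply mul_le_mul_of_nonneg_left _ (by positivity)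
    rw [Nat.choose_succ_succ]
    push_cast
    have : (0:ℝ) ≤ (y.choose (L+1) : ℝ) := by positivity
    linarith

/-- Uniform expectation. -/
noncomputable def Eu {Ω : Type*} [Fintype Ω] (F : Ω → ℝ) : ℝ := (∑ ω, F ω) / (Fintype.card Ω : ℝ)

section
variable {Ω : Type*} [Fintype Ω]

lemma Eu_mono {F G : Ω → ℝ} (h : ∀ ω, F ω ≤ G ω) : Eu F ≤ Eu G := by
  unfold Eu
  exact div_le_div_of_nonneg_right (Finset.sum_le_sum fun ω _ => h ω) (by positivity)

lemma Eu_nonneg {F : Ω → ℝ} (h : ∀ ω, 0 ≤ F ω) : 0 ≤ Eu F := by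
  unfold Eu
  exact div_nonneg (Finset.sum_nonneg fun ω _ => h ω) (by positivity)

lemma Eu_add (F G : Ω → ℝ) : Eu (fun ω => F ω + G ω) = Eu F + Eu G := by
  unfold Eu; rw [Finset.sum_add_distrib, add_div]

lemma Eu_sub (F G : Ω → ℝ) : Eu (fun ω => F ω - G ω) = Eu F - Eu G := by
  unfold Eu; rw [Finset.sum_sub_distrib, sub_div]

lemma Eu_mul (c : ℝ) (F : Ω → ℝ) : Eu (fun ω => c * F ω) = c * Eu F := by
  unfold Eu; rw [← Finset.mul_sum, mul_div_assoc]

lemma Eu_sum {ι : Type*} (T : Finset ι) (F : ι → Ω → ℝ) :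
    Eu (fun ω => ∑ t ∈ T, F t ω) = ∑ t ∈ T, Eu (F t) := by
  unfold Eu; rw [Finset.sum_comm, Finset.sum_div]

lemma Eu_abs (F : Ω → ℝ) : |Eu F| ≤ Eu (fun ω => |F ω|) := by
  unfold Eu
  rw [abs_div, Nat.abs_cast]
  exact div_le_div_of_nonneg_right (Finset.abs_sum_le_sum_abs _ _) (by positivity)

lemma Eu_one [Nonempty Ω] : Eu (fun _ : Ω => (1:ℝ)) = 1 := by
  unfold Eu
  have : (0:ℝ) < Fintype.card Ω := by exact_mod_cast Fintype.card_pos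
  simp

end

lemma moments {Ω : ℕ → Type} [∀ n, Fintype (Ω n)] (X : ∀ n, Ω n → ℕ) (l : ℝ)
    (h : ∀ r, Tendsto (fun n => Eu (fun ω => ((X n ω).descFactorial r : ℝ))) atTop (nhds (l ^ r)))
    (m : ℕ) :
    Tendsto (fun n => Eu (fun ω => ind (X n ω = m))) atTop
      (nhds (Real.exp (-l) * l ^ m / (m.factorial : ℝ))) := by
  have hM : ∀ r, Tendsto (fun n => Eu (fun ω => ((X n ω).choose r : ℝ))) atTop
      (nhds (l ^ r / (r.factorial : ℝ))) := by
    intro r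
    have := (h r).const_mul ((r.factorial : ℝ)⁻¹)
    rw [inv_mul_eq_div] at this
    refine this.congr fun n => ?_
    rw [← Eu_mul]
    congr 1
    funext ω
    rw [Nat.descFactorial_eq_factorial_mul_choose]
    have : (r.factorial : ℝ) ≠ 0 := by positivity
    push_cast
    field_simp
  have hch : ∀ k, ((m+k).choose m : ℝ) * (l ^ (m+k) / ((m+k).factorial : ℝ)) =
      l ^ m / (m.factorial : ℝ) * (l ^ k / (k.factorial : ℝ)) := by
    intro k
    have : ((m+k).choose m : ℝ) * m.factorial * k.factorial = ((m+k).factorial : ℝ) := by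
      have := Nat.choose_mul_factorial_mul_factorial (n := m+k) (k := m) (by omega)
      rw [Nat.add_sub_cancel_left] at this
      exact_mod_cast this
    have h1 : (m.factorial : ℝ) ≠ 0 := by positivity
    have h2 : (k.factorial : ℝ) ≠ 0 := by positivity
    have h3 : (((m+k).choose m : ℕ) : ℝ) ≠ 0 := by
      have : 0 < (m+k).choose m := Nat.choose_pos (by omega)
      positivity
    rw [← this, pow_add]
    field_simp
  have hB : Tendsto (fun L => ∑ k ∈ range (L+1), (-1:ℝ)^k * (((m+k).choose m : ℝ) * (l ^ (m+k) / ((m+k).factorial : ℝ))))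
      atTop (nhds (Real.exp (-l) * l ^ m / (m.factorial : ℝ))) := by
    have h1 : HasSum (fun k : ℕ => (-l)^k / (k.factorial : ℝ)) (Real.exp (-l)) := by
      rw [Real.exp_eq_exp_ℝ]
      exact NormedSpace.expSeries_div_hasSum_exp (-l)
    have h2 := (h1.tendsto_sum_nat.comp (tendsto_add_atTop_nat 1)).const_mul (l ^ m / (m.factorial : ℝ))
    have e : Real.exp (-l) * l ^ m / (m.factorial : ℝ) = l ^ m / (m.factorial : ℝ) * Real.exp (-l) := by ring
    rw [e]
    refine h2.congr fun L => ?_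
    simp only [Function.comp]
    rw [Finset.mul_sum]
    apply Finset.sum_congr rfl
    intro k _
    rw [hch, neg_pow l k]; ring
  have hC : Tendsto (fun L : ℕ => ((m+L+1).choose m : ℝ) * (l ^ (m+L+1) / ((m+L+1).factorial : ℝ))) atTop (nhds 0) := by
    have h1 := (FloorSemiring.tendsto_pow_div_factorial_atTop l).comp (tendsto_add_atTop_nat 1)
    have h2 := h1.const_mul (l ^ m / (m.factorial : ℝ))
    rw [mul_zero] at h2
    refine h2.congr fun L => ?_
    exact (hch (L+1)).symm
  apply tendsto_approx
  intro ε hε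
  have h1 := (Metric.tendsto_nhds.mp hB) ε hε
  have h2 := (Metric.tendsto_nhds.mp hC) ε hε
  obtain ⟨L, h1, h2⟩ := (h1.and h2).exists
  rw [Real.dist_eq] at h1 h2
  refine ⟨fun n => ∑ k ∈ range (L+1), (-1:ℝ)^k * (((m+k).choose m : ℝ) * Eu (fun ω : Ω n => ((X n ω).choose (m+k) : ℝ))),
    fun n => ((m+L+1).choose m : ℝ) * Eu (fun ω : Ω n => ((X n ω).choose (m+L+1) : ℝ)), _, _,
    ?_, (hM _).const_mul _, h1.le, ?_, ?_⟩
  · apply tendsto_finsetSum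
    intro k _
    exact ((hM _).const_mul _).const_mul _
  · rw [sub_zero] at h2; exact (le_abs_self _).trans h2.le
  · refine Eventually.of_forall fun n => ?_
    have e1 : ∑ k ∈ range (L+1), (-1:ℝ)^k * (((m+k).choose m : ℝ) * Eu (fun ω : Ω n => ((X n ω).choose (m+k) : ℝ)))
      = Eu (fun ω : Ω n => ∑ k ∈ range (L+1), (-1:ℝ)^k * ((m+k).choose m : ℝ) * ((X n ω).choose (m+k) : ℝ)) := by
      rw [Eu_sum]
      apply Finset.sum_congr rfl
      intro k _
      rw [Eu_mul]; ring
    beta_reduce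
    rw [e1, ← Eu_sub, ← Eu_mul]
    exact (Eu_abs _).trans (Eu_mono fun ω => choose_err _ _ _)

end Chord


open scoped Classical
open Finset Filter

namespace Chord

lemma probD_eq (n : ℕ) (E : OrientedChordDiagram n → Prop) :
    probD n E = Eu (fun D => ind (E D)) := by
  unfold probD Eu ind
  rw [Finset.card_filter, Finset.card_univ]
  push_cast
  rfl

lemma mem_MM_univ {n : ℕ} (C : ChordDiagram n) : C.1 ∈ MM (univ : Finset (Fin (2*n))) := by
  rw [mem_MM]
  exact ⟨C.2.1, fun x => by simp [C.2.2 x]⟩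

lemma sum_diagram {n : ℕ} (G : (Fin (2*n) → Fin (2*n)) → ℝ) :
    ∑ C : ChordDiagram n, G C.1 = ∑ f ∈ MM (univ : Finset (Fin (2*n))), G f := by
  symm
  apply Finset.sum_subtype
  intro f
  rw [mem_MM]
  simp

lemma card_diagram (n : ℕ) : (Fintype.card (ChordDiagram n) : ℝ) = dm n := by
  have h := sum_diagram (n := n) (fun _ => (1:ℝ))
  simp only [Finset.sum_const, nsmul_eq_mul, mul_one, Finset.card_univ] at h
  rw [h]
  exact card_MM n univ (by simp)

lemma dm_pos' (n : ℕ) : (0:ℝ) < dm n := by exact_mod_cast dm_pos n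

lemma Eu_split {n : ℕ} (F : OrientedChordDiagram n → ℝ) :
    Eu F = (∑ C : ChordDiagram n, Eo (fun ω => F (C, ω))) / dm n := by
  unfold Eu Eo
  rw [← Finset.sum_div, Fintype.card_prod, Fintype.sum_prod_type]
  push_cast
  rw [card_diagram, div_div]
  exact congrArg _ (mul_comm _ _)

lemma Eu_le_of {n : ℕ} (F : OrientedChordDiagram n → ℝ) (G : (Fin (2*n) → Fin (2*n)) → ℝ)
    (h : ∀ C : ChordDiagram n, Eo (fun ω => F (C, ω)) ≤ G C.1) :
    Eu F ≤ (∑ f ∈ MM (univ : Finset (Fin (2*n))), G f) / dm n := by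
  rw [Eu_split, ← sum_diagram]
  exact div_le_div_of_nonneg_right (Finset.sum_le_sum fun C _ => h C) (dm_pos' n).le

instance (n : ℕ) : Nonempty (OrientedChordDiagram n) := by
  have h : (0:ℝ) < Fintype.card (ChordDiagram n) := by rw [card_diagram]; exact dm_pos' n
  have h2 : 0 < Fintype.card (ChordDiagram n) := by exact_mod_cast h
  obtain ⟨C⟩ := Fintype.card_pos_iff.mp h2
  exact ⟨(C, fun _ _ => true)⟩

/-- Probability that `r` given disjoint chords are present. -/
noncomputable def R (n r : ℕ) : ℝ := (dm (n - r) : ℝ) / dm n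

lemma R_nonneg (n r : ℕ) : 0 ≤ R n r := by unfold R; positivity

lemma R_succ (n r : ℕ) (h : r < n) : R n (r+1) = R n r / (2 * n - 2 * r - 1) := by
  unfold R
  obtain ⟨k, rfl⟩ : ∃ k, n = k + (r + 1) := ⟨n - (r+1), by omega⟩
  have e1 : k + (r+1) - (r+1) = k := by omega
  have e2 : k + (r+1) - r = k + 1 := by omega
  rw [e1, e2]
  simp only [dm]
  have := dm_pos' (k + (r+1))
  push_cast
  have h3 : (2 * ((k:ℝ) + (r+1)) - 2 * r - 1) = 2 * k + 1 := by ring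
  rw [h3]
  have : (0:ℝ) < 2 * k + 1 := by positivity
  field_simp

lemma R_zero (n : ℕ) : R n 0 = 1 := by
  unfold R; simp [(dm_pos' n).ne']

lemma R_le (n r : ℕ) (h : 2 * r ≤ n) : R n r ≤ 1 / (n:ℝ) ^ r := by
  induction r with
  | zero => simp [R_zero]
  | succ r ih =>
    rw [R_succ n r (by omega)]
    have h1 := ih (by omega)
    have hn : (0:ℝ) < n := by
      have : 0 < n := by omega
      exact_mod_cast this
    have h2 : (n:ℝ) ≤ 2 * n - 2 * r - 1 := by
      have : (2 * (r + 1) : ℝ) ≤ n := by exact_mod_cast h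
      linarith
    calc R n r / (2 * n - 2 * r - 1) ≤ (1 / (n:ℝ)^r) / n := by
          apply div_le_div₀ (by positivity) h1 hn h2
      _ = _ := by rw [pow_succ]; field_simp

lemma R_tendsto (r : ℕ) : Tendsto (fun n : ℕ => R n r * (2 * n : ℝ) ^ r) atTop (nhds 1) := by
  induction r with
  | zero => simp [R_zero]
  | succ r ih =>
    have h1 : Tendsto (fun n : ℕ => ((2 * n : ℝ)) / (2 * n - 2 * r - 1)) atTop (nhds 1) := by
      have h2 : Tendsto (fun n : ℕ => (2 * r + 1 : ℝ) / (n:ℝ)) atTop (nhds 0) :=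
        tendsto_const_div_atTop_nhds_zero_nat _
      have h3 : Tendsto (fun n : ℕ => (2:ℝ) / (2 - (2 * r + 1 : ℝ) / (n:ℝ))) atTop (nhds (2 / (2 - 0))) :=
        Tendsto.div tendsto_const_nhds (tendsto_const_nhds.sub h2) (by norm_num)
      have e : (2:ℝ) / (2 - 0) = 1 := by norm_num
      rw [e] at h3
      refine h3.congr' ?_
      filter_upwards [eventually_gt_atTop 0] with n hn
      have : (n:ℝ) ≠ 0 := by exact_mod_cast hn.ne'
      rw [← mul_div_mul_right _ _ this]
      congr 1
      field_simp
      ring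
    have h4 := ih.mul h1
    rw [mul_one] at h4
    refine h4.congr' ?_
    filter_upwards [eventually_gt_atTop r] with n hn
    rw [R_succ n r hn, pow_succ]
    ring

lemma count_fixed_le {n r : ℕ} (s : Fin r → Fin (2*n) × Fin (2*n)) (hlt : ∀ k, (s k).1 < (s k).2)
    (hinj : Function.Injective s) :
    ((((MM (univ : Finset (Fin (2*n)))).filter (fun f => ∀ k, f (s k).1 = (s k).2)).card : ℕ) : ℝ) / dm n
      ≤ R n r := by
  by_cases hd : ∀ k l, k ≠ l → (s k).1 ≠ (s l).1 ∧ (s k).1 ≠ (s l).2 ∧ (s k).2 ≠ (s l).1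
      ∧ (s k).2 ≠ (s l).2
  · have := count_fixed s univ n (univ : Finset (Fin (2*n))) (by simp) (fun k _ => ⟨(hlt k).ne, by simp, by simp⟩)
      (fun k _ l _ h => hd k l h)
    simp only [Finset.mem_univ, forall_const, Finset.card_univ, Fintype.card_fin] at this
    rw [this.2]; rfl
  · have : ((MM (univ : Finset (Fin (2*n)))).filter (fun f => ∀ k, f (s k).1 = (s k).2)) = ∅ := by
      rw [Finset.filter_eq_empty_iff]
      intro f hf hs
      apply hd
      intro k l hkl
      rw [mem_MM] at hf
      have hne : s k ≠ s l := fun h => hkl (hinj h)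
      have h1 := hs k; have h2 := hs l; have h3 := hlt k; have h4 := hlt l
      have h5 := hf.1 (s k).1; have h6 := hf.1 (s l).1
      rw [h1] at h5; rw [h2] at h6
      have hne' : ¬ ((s k).1 = (s l).1 ∧ (s k).2 = (s l).2) := fun h => hne (Prod.ext h.1 h.2)
      refine ⟨?_, ?_, ?_, ?_⟩
      · intro h; apply hne'; refine ⟨h, ?_⟩; rw [← h1, ← h2, h]
      · intro h
        have : (s k).2 = (s l).1 := by rw [← h1, h, h6]
        rw [this, h] at h3
        exact absurd h3 (not_lt.mpr h4.le)
      · intro h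
        have : (s k).1 = (s l).2 := by rw [← h5, h, h2]
        rw [← h, ← this] at h4
        exact absurd h3 (not_lt.mpr h4.le)
      · intro h; apply hne'; refine ⟨?_, h⟩; rw [← h5, ← h6, h]
    rw [this]
    simp [R_nonneg]

lemma count_fixed_eq {n r : ℕ} (s : Fin r → Fin (2*n) × Fin (2*n)) (hlt : ∀ k, (s k).1 < (s k).2)
    (hd : ∀ k l, k ≠ l → (s k).1 ≠ (s l).1 ∧ (s k).1 ≠ (s l).2 ∧ (s k).2 ≠ (s l).1
      ∧ (s k).2 ≠ (s l).2) :
    ((((MM (univ : Finset (Fin (2*n)))).filter (fun f => ∀ k, f (s k).1 = (s k).2)).card : ℕ) : ℝ) / dm n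
      = R n r := by
  have := count_fixed s univ n (univ : Finset (Fin (2*n))) (by simp) (fun k _ => ⟨(hlt k).ne, by simp, by simp⟩)
      (fun k _ l _ h => hd k l h)
  simp only [Finset.mem_univ, forall_const, Finset.card_univ, Fintype.card_fin] at this
  rw [this.2]; rfl

/-- Union bound over configurations of `r` chords. -/
lemma prob_union {n r : ℕ} {ι : Type*} (T : Finset ι) (s : ι → Fin r → Fin (2*n) × Fin (2*n))
    (hlt : ∀ t ∈ T, ∀ k, (s t k).1 < (s t k).2) (hinj : ∀ t ∈ T, Function.Injective (s t))
    (E : OrientedChordDiagram n → Prop)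
    (hE : ∀ D, E D → ∃ t ∈ T, ∀ k, D.1.1 (s t k).1 = (s t k).2) :
    Eu (fun D => ind (E D)) ≤ T.card * R n r := by
  have h1 : Eu (fun D => ind (E D)) ≤ (∑ f ∈ MM (univ : Finset (Fin (2*n))),
      ∑ t ∈ T, ind (∀ k, f (s t k).1 = (s t k).2)) / dm n := by
    apply Eu_le_of _ (fun f => ∑ t ∈ T, ind (∀ k, f (s t k).1 = (s t k).2))
    intro C
    rw [← Eo_const (N := 2*n) (∑ t ∈ T, ind (∀ k, C.1 (s t k).1 = (s t k).2))]
    apply Eo_mono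
    intro ω
    by_cases h : E (C, ω)
    · rw [ind_true h]
      obtain ⟨t, ht, hs⟩ := hE _ h
      rw [← ind_true hs]
      exact Finset.single_le_sum (f := fun t => ind (∀ k, C.1 (s t k).1 = (s t k).2))
        (fun t _ => ind_nonneg _) ht
    · rw [ind_false h]
      exact Finset.sum_nonneg fun t _ => ind_nonneg _
  refine h1.trans ?_
  rw [Finset.sum_comm, Finset.sum_div, ← nsmul_eq_mul]
  apply Finset.sum_le_card_nsmul
  intro t ht
  refine le_trans (le_of_eq ?_) (count_fixed_le (s t) (hlt t ht) (hinj t ht))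
  congr 1
  rw [Finset.card_filter]
  push_cast
  apply Finset.sum_congr rfl
  intro x _
  unfold ind
  congr

/-- version for one chord at a given point -/
lemma prob_one {n : ℕ} (hn : 0 < n) (p : Fin (2*n)) (Q : Finset (Fin (2*n)))
    (E : OrientedChordDiagram n → Prop) (hE : ∀ D, E D → D.1.1 p ∈ Q) :
    Eu (fun D => ind (E D)) ≤ Q.card / n := by
  have h : Eu (fun D => ind (E D)) ≤ (Q.filter (· ≠ p)).card * R n 1 := by
    apply prob_union (r := 1) (Q.filter (· ≠ p)) (fun q _ => (min p q, max p q))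
    · intro t ht _
      simp only [Finset.mem_filter] at ht
      simp only [min_lt_max]; exact ht.2.symm
    · intro t _ a b _
      exact Subsingleton.elim _ _
    · intro D hD
      refine ⟨D.1.1 p, ?_, ?_⟩
      · simp only [Finset.mem_filter]; exact ⟨hE D hD, D.1.2.2 p⟩
      · intro _
        simp only
        rcases le_total p (D.1.1 p) with h | h
        · rw [min_eq_left h, max_eq_right h]
        · rw [min_eq_right h, max_eq_left h, D.1.2.1]
  refine h.trans ?_
  have hn' : (1:ℝ) ≤ n := by exact_mod_cast hn
  have h1 : R n 1 ≤ 1 / n := by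
    rw [R_succ n 0 hn, R_zero]
    apply one_div_le_one_div_of_le (by linarith)
    push_cast; linarith
  rw [div_eq_mul_one_div]
  apply mul_le_mul _ h1 (R_nonneg _ _) (by positivity)
  exact_mod_cast Finset.card_le_card (Finset.filter_subset _ _)

/-! Crossing -/

lemma crosses_iff {n : ℕ} (C : ChordDiagram n) (x u : Fin (2*n)) :
    Crosses C x u ↔ ¬ (Between x (C.1 x) u ↔ Between x (C.1 x) (C.1 u)) := by
  unfold Crosses
  exact xor_iff_not_iff _ _

lemma rep_ne_of_crosses {n : ℕ} {C : ChordDiagram n} {x u : Fin (2*n)} (h : Crosses C x u) :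
    u ≠ x ∧ u ≠ C.1 x := by
  rw [crosses_iff] at h
  constructor
  · rintro rfl
    apply h
    simp only [Between, min_lt_iff, lt_max_iff]
    simp [and_comm]
  · rintro rfl
    apply h
    rw [C.2.1]
    simp only [Between, min_lt_iff, lt_max_iff]
    simp [and_comm]

lemma chordRep_eq_iff {n : ℕ} (C : ChordDiagram n) (x u : Fin (2*n)) :
    chordRep C x = chordRep C u ↔ u = x ∨ u = C.1 x := by
  unfold chordRep
  constructor
  · intro h
    have h1 := C.2.1 x; have h2 := C.2.1 u
    rcases le_total x (C.1 x) with hx | hx <;> rcases le_total u (C.1 u) with hu | hu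
    · rw [min_eq_left hx, min_eq_left hu] at h; exact Or.inl h.symm
    · rw [min_eq_left hx, min_eq_right hu] at h; right; rw [h, h2]
    · rw [min_eq_right hx, min_eq_left hu] at h; right; exact h.symm
    · rw [min_eq_right hx, min_eq_right hu] at h; left; rw [← h1, h, h2]
  · rintro (rfl | rfl)
    · rfl
    · rw [C.2.1, min_comm]

lemma overD_iff {n : ℕ} (D : OrientedChordDiagram n) (x u : Fin (2*n)) :
    OverD D x u ↔ Crosses D.1 x u ∧ ov D.2 (chordRep D.1 x) (chordRep D.1 u) := Iff.rfl

lemma between_comm {m : ℕ} (a b c : Fin m) : Between a b c ↔ Between b a c := by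
  unfold Between; rw [min_comm, max_comm]

lemma crosses_left {n : ℕ} (C : ChordDiagram n) (x u : Fin (2*n)) :
    Crosses C (C.1 x) u ↔ Crosses C x u := by
  rw [crosses_iff, crosses_iff, C.2.1, between_comm, between_comm (C.1 x) x (C.1 u)]

lemma crosses_right {n : ℕ} (C : ChordDiagram n) (x u : Fin (2*n)) :
    Crosses C x (C.1 u) ↔ Crosses C x u := by
  rw [crosses_iff, crosses_iff, C.2.1]; tauto

lemma chordRep_swap {n : ℕ} (C : ChordDiagram n) (x : Fin (2*n)) :
    chordRep C (C.1 x) = chordRep C x := by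
  unfold chordRep; rw [C.2.1, min_comm]

lemma crosses_symm {n : ℕ} {C : ChordDiagram n} {x u : Fin (2*n)} (h : Crosses C x u) :
    Crosses C u x := by
  obtain ⟨h1, h2⟩ := rep_ne_of_crosses h
  have h3 : C.1 u ≠ x := by intro h'; apply h2; rw [← h', C.2.1]
  have h4 : C.1 u ≠ C.1 x := by intro h'; apply h1; rw [← C.2.1 u, h', C.2.1]
  rw [crosses_iff] at h ⊢
  unfold Between at *
  simp only [min_lt_iff, lt_max_iff] at *
  have := C.2.2 u; have := C.2.2 x
  generalize C.1 x = y at *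
  generalize C.1 u = v at *
  simp only [ne_eq, Fin.ext_iff, Fin.lt_def] at *
  omega

lemma overD_left {n : ℕ} (D : OrientedChordDiagram n) (x u : Fin (2*n)) :
    OverD D (D.1.1 x) u ↔ OverD D x u := by
  rw [overD_iff, overD_iff, crosses_left, chordRep_swap]

lemma overD_right {n : ℕ} (D : OrientedChordDiagram n) (x u : Fin (2*n)) :
    OverD D x (D.1.1 u) ↔ OverD D x u := by
  rw [overD_iff, overD_iff, crosses_right, chordRep_swap]

lemma over_total {n : ℕ} {D : OrientedChordDiagram n} {x u : Fin (2*n)} (h : Crosses D.1 x u) :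
    OverD D u x ↔ ¬ OverD D x u := by
  have hr : chordRep D.1 x ≠ chordRep D.1 u := by
    rw [ne_eq, chordRep_eq_iff]
    have := rep_ne_of_crosses h
    tauto
  rw [overD_iff, overD_iff, ov_symm _ hr]
  have := crosses_symm h
  tauto

/-! Reachability -/

lemma reach_refl {n : ℕ} (D : OrientedChordDiagram n) (x : Fin (2*n)) : ReachChord D x x := Or.inl rfl

lemma reach_of_over {n : ℕ} {D : OrientedChordDiagram n} {x u : Fin (2*n)} (h : OverD D x u) :
    ReachChord D x u := Or.inr (Or.inr (Relation.ReflTransGen.single h))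

/-- cleaned up description of reachability -/
lemma reach_iff {n : ℕ} (D : OrientedChordDiagram n) (x u : Fin (2*n)) :
    ReachChord D x u ↔ (u = x ∨ u = D.1.1 x) ∨ Relation.TransGen (fun a b => OverD D a b) x u := by
  unfold ReachChord
  rw [Relation.reflTransGen_iff_eq_or_transGen]
  tauto

lemma transGen_left {n : ℕ} {D : OrientedChordDiagram n} {x u : Fin (2*n)}
    (h : Relation.TransGen (fun a b => OverD D a b) x u) :
    Relation.TransGen (fun a b => OverD D a b) (D.1.1 x) u := by
  obtain ⟨b, h1, h2⟩ := Relation.TransGen.head'_iff.mp h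
  exact Relation.TransGen.head' ((overD_left D x b).mpr h1) h2

lemma transGen_right {n : ℕ} {D : OrientedChordDiagram n} {x u : Fin (2*n)}
    (h : Relation.TransGen (fun a b => OverD D a b) x u) :
    Relation.TransGen (fun a b => OverD D a b) x (D.1.1 u) := by
  obtain ⟨b, h1, h2⟩ := Relation.TransGen.tail'_iff.mp h
  exact Relation.TransGen.tail' h1 ((overD_right D b u).mpr h2)

lemma reach_trans {n : ℕ} {D : OrientedChordDiagram n} {x y z : Fin (2*n)}
    (h1 : ReachChord D x y) (h2 : ReachChord D y z) : ReachChord D x z := by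
  rw [reach_iff] at *
  rcases h1 with (rfl | rfl) | h1
  · exact h2
  · rcases h2 with (rfl | rfl) | h2
    · simp
    · left; left; exact D.1.2.1 x
    · right
      have := transGen_left h2
      rwa [D.1.2.1] at this
  · right
    rcases h2 with (rfl | rfl) | h2
    · exact h1
    · exact transGen_right h1
    · exact h1.trans h2

lemma reach_swap {n : ℕ} (D : OrientedChordDiagram n) (x : Fin (2*n)) :
    ReachChord D x (D.1.1 x) := Or.inr (Or.inl rfl)

lemma mutual_refl {n : ℕ} (D : OrientedChordDiagram n) (x : Fin (2*n)) : MutualReach D x x :=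
  ⟨reach_refl _ _, reach_refl _ _⟩

lemma mutual_symm {n : ℕ} {D : OrientedChordDiagram n} {x y : Fin (2*n)} (h : MutualReach D x y) :
    MutualReach D y x := ⟨h.2, h.1⟩

lemma mutual_trans {n : ℕ} {D : OrientedChordDiagram n} {x y z : Fin (2*n)}
    (h1 : MutualReach D x y) (h2 : MutualReach D y z) : MutualReach D x z :=
  ⟨reach_trans h1.1 h2.1, reach_trans h2.2 h1.2⟩

lemma mutual_swap {n : ℕ} (D : OrientedChordDiagram n) (x : Fin (2*n)) :
    MutualReach D x (D.1.1 x) := by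
  refine ⟨reach_swap D x, ?_⟩
  have := reach_swap D (D.1.1 x)
  rwa [D.1.2.1] at this

/-- a chord all of whose crossings point the same way -/
def Extreme {n : ℕ} (D : OrientedChordDiagram n) (x : Fin (2*n)) : Prop :=
  (∀ u, ¬ OverD D x u) ∨ (∀ u, ¬ OverD D u x)

lemma extreme_single {n : ℕ} {D : OrientedChordDiagram n} {x : Fin (2*n)} (h : Extreme D x)
    (u : Fin (2*n)) (h1 : u ≠ x) (h2 : u ≠ D.1.1 x) : ¬ MutualReach D x u := by
  rintro ⟨a, b⟩
  rw [reach_iff] at a b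
  have h3 : D.1.1 u ≠ x := by intro h'; apply h2; rw [← h', D.1.2.1]
  have a' : Relation.TransGen (fun a b => OverD D a b) x u := by tauto
  have b' : Relation.TransGen (fun a b => OverD D a b) u x := by
    rcases b with (b | b) | b
    · exact absurd b.symm h1
    · exact absurd b.symm h3
    · exact b
  rcases h with h | h
  · obtain ⟨c, h4, _⟩ := Relation.TransGen.head'_iff.mp a'
    exact h c h4
  · obtain ⟨c, _, h4⟩ := Relation.TransGen.tail'_iff.mp b'
    exact h c h4

end Chord


open scoped Classical
open Finset Filter

namespace Chord

def Short {n : ℕ} (K : ℕ) (C : ChordDiagram n) (x : Fin (2*n)) : Prop :=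
  (x:ℕ) ≤ C.1 x + K ∧ (C.1 x : ℕ) ≤ x + K

lemma short_swap {n K : ℕ} (C : ChordDiagram n) (x : Fin (2*n)) :
    Short K C (C.1 x) ↔ Short K C x := by
  unfold Short; rw [C.2.1]; tauto

/-- number of extreme short chords -/
noncomputable def TK (K n : ℕ) (D : OrientedChordDiagram n) : ℕ :=
  (Finset.univ.filter fun s : Fin (2*n) × Fin K =>
    (D.1.1 s.1 : ℕ) = s.1 + s.2 + 1 ∧ Extreme D s.1).card

/-- the good event -/
structure Good (K n : ℕ) (D : OrientedChordDiagram n) (o p : Fin (2*n)) : Prop where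
  long : ∀ x, ¬ Short K D.1 x → MutualReach D x o
  nocross : ∀ x u, Short K D.1 x → Short K D.1 u → ¬ Crosses D.1 x u
  lo : ¬ Short K D.1 o
  lp : ¬ Short K D.1 p
  ne : p ≠ o ∧ p ≠ D.1.1 o

section
variable {K n : ℕ} {D : OrientedChordDiagram n} {o p : Fin (2*n)}

lemma Good.nonextreme (h : Good K n D o p) (x : Fin (2*n)) (hx : ¬ Extreme D x) :
    MutualReach D x o := by
  by_cases hs : Short K D.1 x
  · unfold Extreme at hx
    push Not at hx
    obtain ⟨⟨u, hu⟩, ⟨v, hv⟩⟩ := hx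
    have hu' : ¬ Short K D.1 u := fun hh => h.nocross x u hs hh hu.1
    have hv' : ¬ Short K D.1 v := fun hh => h.nocross v x hh hs hv.1
    exact ⟨reach_trans (reach_of_over hu) (h.long u hu').1,
      reach_trans (h.long v hv').2 (reach_of_over hv)⟩
  · exact h.long x hs

lemma Good.longwit (h : Good K n D o p) (x : Fin (2*n)) (hx : ¬ Short K D.1 x) :
    ∃ u, u ≠ x ∧ u ≠ D.1.1 x ∧ MutualReach D x u := by
  by_cases hxo : o = x ∨ o = D.1.1 x
  · refine ⟨p, ?_, ?_, mutual_trans (h.long x hx) (mutual_symm (h.long p h.lp))⟩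
    · rcases hxo with rfl | rfl
      · exact h.ne.1
      · have := h.ne.2; rwa [D.1.2.1] at this
    · rcases hxo with rfl | rfl
      · exact h.ne.2
      · exact h.ne.1
  · push Not at hxo
    exact ⟨o, hxo.1, hxo.2, h.long x hx⟩

lemma Good.single_iff (h : Good K n D o p) (x : Fin (2*n)) :
    (∀ u : Fin (2*n), u ≠ x → u ≠ D.1.1 x → ¬ MutualReach D x u) ↔
      (Short K D.1 x ∧ Extreme D x) := by
  constructor
  · intro hx
    have hs : Short K D.1 x := by
      by_contra hs
      obtain ⟨u, h1, h2, h3⟩ := h.longwit x hs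
      exact hx u h1 h2 h3
    refine ⟨hs, ?_⟩
    by_contra he
    refine hx o ?_ ?_ (h.nonextreme x he)
    · rintro rfl; exact h.lo hs
    · intro e; apply h.lo; rw [e, short_swap]; exact hs
  · rintro ⟨_, he⟩ u h1 h2
    exact extreme_single he u h1 h2

lemma Good.second (h : Good K n D o p) :
    (∃ x u : Fin (2*n), u ≠ x ∧ u ≠ D.1.1 x ∧ MutualReach D x u) ∧
        ∀ x y : Fin (2*n),
          (∃ u, u ≠ x ∧ u ≠ D.1.1 x ∧ MutualReach D x u) →
          (∃ v, v ≠ y ∧ v ≠ D.1.1 y ∧ MutualReach D y v) →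
          MutualReach D x y := by
  refine ⟨⟨o, h.longwit o h.lo⟩, ?_⟩
  have key : ∀ x : Fin (2*n), (∃ u, u ≠ x ∧ u ≠ D.1.1 x ∧ MutualReach D x u) → MutualReach D x o := by
    rintro x ⟨u, h1, h2, h3⟩
    exact h.nonextreme x fun he => extreme_single he u h1 h2 h3
  intro x y hx hy
  exact mutual_trans (key x hx) (mutual_symm (key y hy))

lemma Good.count (h : Good K n D o p) : singleCount n D = TK K n D := by
  unfold singleCount TK
  symm
  apply Finset.card_bij (fun s _ => s.1)
  · intro s hs
    simp only [Finset.mem_filter, Finset.mem_univ, true_and] at hs ⊢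
    have h1 := hs.1
    have h2 := s.2.2
    refine ⟨by rw [Fin.lt_def]; omega, (h.single_iff _).mpr ⟨⟨by omega, by omega⟩, hs.2⟩⟩
  · intro s hs t ht hst
    simp only [Finset.mem_filter, Finset.mem_univ, true_and] at hs ht
    have h1 := hs.1
    have h2 := ht.1
    rw [← hst] at h2
    refine Prod.ext hst (Fin.ext ?_)
    omega
  · intro x hx
    simp only [Finset.mem_filter, Finset.mem_univ, true_and] at hx
    obtain ⟨hx1, hx2⟩ := hx
    rw [h.single_iff] at hx2
    obtain ⟨⟨_, h3⟩, h4⟩ := hx2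
    rw [Fin.lt_def] at hx1
    refine ⟨(x, ⟨(D.1.1 x : ℕ) - x - 1, by omega⟩), ?_, rfl⟩
    simp only [Finset.mem_filter, Finset.mem_univ, true_and]
    exact ⟨by omega, h4⟩

end

end Chord


open scoped Classical
open Finset Filter

namespace Chord

lemma crossing_cases {n : ℕ} {C : ChordDiagram n} {x u : Fin (2*n)} (h : Crosses C x u) :
    ∃ i k : Fin (2*n), (i = x ∨ i = C.1 x ∨ i = u ∨ i = C.1 u) ∧ (k = x ∨ k = C.1 x ∨ k = u ∨ k = C.1 u) ∧
      i < k ∧ k < C.1 i ∧ C.1 i < C.1 k := by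
  obtain ⟨h1, h2⟩ := rep_ne_of_crosses h
  have h3 : C.1 u ≠ x := by intro h'; apply h2; rw [← h', C.2.1]
  have h4 : C.1 u ≠ C.1 x := by intro h'; apply h1; rw [← C.2.1 u, h', C.2.1]
  have hx := C.2.1 x
  have hu := C.2.1 u
  have h5 := C.2.2 u; have h6 := C.2.2 x
  rw [crosses_iff] at h
  unfold Between at h
  simp only [min_lt_iff, lt_max_iff] at h
  simp only [ne_eq, Fin.ext_iff, Fin.lt_def] at h h1 h2 h3 h4 h5 h6
  have e1 : min (x:ℕ) (C.1 x) < min (u:ℕ) (C.1 u) ∨ min (u:ℕ) (C.1 u) < min (x:ℕ) (C.1 x) := by omega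
  rcases lt_or_ge (x:ℕ) (C.1 x) with hx' | hx' <;> rcases lt_or_ge (u:ℕ) (C.1 u) with hu' | hu' <;>
  rcases e1 with e1 | e1
  · exact ⟨x, u, by simp, by simp, by simp only [Fin.lt_def]; omega⟩
  · exact ⟨u, x, by simp, by simp, by simp only [Fin.lt_def]; omega⟩
  · exact ⟨x, C.1 u, by simp, by simp, by simp only [Fin.lt_def, hu]; omega⟩
  · exact ⟨C.1 u, x, by simp, by simp, by simp only [Fin.lt_def, hu]; omega⟩
  · exact ⟨C.1 x, u, by simp, by simp, by simp only [Fin.lt_def, hx]; omega⟩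
  · exact ⟨u, C.1 x, by simp, by simp, by simp only [Fin.lt_def, hx]; omega⟩
  · exact ⟨C.1 x, C.1 u, by simp, by simp, by simp only [Fin.lt_def, hx, hu]; omega⟩
  · exact ⟨C.1 u, C.1 x, by simp, by simp, by simp only [Fin.lt_def, hx, hu]; omega⟩

lemma prob_nocross (K n : ℕ) :
    Eu (fun D : OrientedChordDiagram n =>
      ind (∃ x u, Short K D.1 x ∧ Short K D.1 u ∧ Crosses D.1 x u))
      ≤ (2 * n * (2 * K + 1) ^ 3 : ℕ) * R n 2 := by
  let T : Finset (Fin (2*n) × Fin (2*n) × Fin (2*n) × Fin (2*n)) :=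
    univ.filter fun t => t.1 < t.2.2.1 ∧ t.2.2.1 < t.2.1 ∧ t.2.1 < t.2.2.2 ∧
      (t.2.1 : ℕ) ≤ t.1 + K ∧ (t.2.2.2 : ℕ) ≤ t.2.2.1 + K
  have hT : T.card ≤ 2 * n * (2 * K + 1) ^ 3 := by
    have : T.card ≤ (univ : Finset (Fin (2*n) × Fin (2*K+1) × Fin (2*K+1) × Fin (2*K+1))).card := by
      apply Finset.card_le_card_of_injOn (fun t => (t.1, (⟨((t.2.1:ℕ) - t.1) % (2*K+1), Nat.mod_lt _ (by omega)⟩),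
        (⟨((t.2.2.1:ℕ) - t.1) % (2*K+1), Nat.mod_lt _ (by omega)⟩), (⟨((t.2.2.2:ℕ) - t.1) % (2*K+1), Nat.mod_lt _ (by omega)⟩)))
      · intro t _; simp
      · rintro ⟨i, j, k, l⟩ ht ⟨i', j', k', l'⟩ ht' he
        simp only [T, Finset.coe_filter, Finset.mem_univ, true_and, Set.mem_ofPred_eq, Fin.lt_def] at ht ht'
        simp only [Prod.mk.injEq, Fin.mk.injEq] at he
        obtain ⟨rfl, h1, h2, h3⟩ := he
        rw [Nat.mod_eq_of_lt (by omega), Nat.mod_eq_of_lt (by omega)] at h1 h2 h3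
        simp only [Prod.mk.injEq, Fin.ext_iff, true_and]
        omega
    refine this.trans (le_of_eq ?_)
    simp only [Finset.card_univ, Fintype.card_prod, Fintype.card_fin]
    ring
  refine le_trans (prob_union (r := 2) T (fun t => ![(t.1, t.2.1), (t.2.2.1, t.2.2.2)]) ?_ ?_ _ ?_)
    (mul_le_mul_of_nonneg_right (by exact_mod_cast hT) (R_nonneg _ _))
  · intro t ht k
    simp only [T, Finset.mem_filter, Finset.mem_univ, true_and] at ht
    fin_cases k
    · exact ht.1.trans ht.2.1
    · exact ht.2.1.trans ht.2.2.1
  · intro t ht a b hab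
    simp only [T, Finset.mem_filter, Finset.mem_univ, true_and] at ht
    have := ht.1
    fin_cases a <;> fin_cases b <;> simp at hab ⊢
    · rw [← hab] at this; exact absurd this (lt_irrefl _)
    · rw [hab] at this; exact absurd this (lt_irrefl _)
  · rintro D ⟨x, u, hx, hu, hc⟩
    obtain ⟨i, k, hi, hk, h1, h2, h3⟩ := crossing_cases hc
    have hx' := (short_swap D.1 x).mpr hx
    have hu' := (short_swap D.1 u).mpr hu
    have si : Short K D.1 i := by rcases hi with rfl | rfl | rfl | rfl <;> assumption
    have sk : Short K D.1 k := by rcases hk with rfl | rfl | rfl | rfl <;> assumption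
    refine ⟨(i, D.1.1 i, k, D.1.1 k), ?_, ?_⟩
    · simp only [T, Finset.mem_filter, Finset.mem_univ, true_and]
      exact ⟨h1, h2, h3, si.2, sk.2⟩
    · intro a; fin_cases a <;> rfl

lemma card_near {m : ℕ} (K : ℕ) (p : Fin m) :
    (univ.filter fun x : Fin m => (x:ℕ) ≤ p + K ∧ (p:ℕ) ≤ x + K).card ≤ 2 * K + 1 := by
  have : (univ.filter fun x : Fin m => (x:ℕ) ≤ p + K ∧ (p:ℕ) ≤ x + K).card ≤ (Finset.range (2*K+1)).card := by
    apply Finset.card_le_card_of_injOn (fun x : Fin m => (x:ℕ) + K - p)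
    · intro x hx
      simp only [Finset.coe_filter, Finset.mem_univ, true_and, Set.mem_ofPred_eq] at hx
      simp only [Finset.coe_range, Set.mem_Iio]; omega
    · intro x hx y hy hxy
      simp only [Finset.coe_filter, Finset.mem_univ, true_and, Set.mem_ofPred_eq] at hx hy
      simp only at hxy
      apply Fin.ext; omega
  simpa using this

lemma prob_short (K n : ℕ) (hn : 0 < n) (p : Fin (2*n)) :
    Eu (fun D : OrientedChordDiagram n => ind (Short K D.1 p)) ≤ (2 * K + 1 : ℕ) / n := by
  refine le_trans (prob_one hn p _ _ (fun D hD => ?_)) (div_le_div_of_nonneg_right (by exact_mod_cast card_near K p) (by positivity))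
  simp only [Finset.mem_filter, Finset.mem_univ, true_and]
  exact ⟨hD.2, hD.1⟩

lemma prob_nice (H n : ℕ) (hn : 0 < n) (o : Fin (2*n)) :
    Eu (fun D : OrientedChordDiagram n => ind (¬ (H ≤ (D.1.1 o : ℕ) ∧ (D.1.1 o : ℕ) + H < 2 * n)))
      ≤ (2 * H : ℕ) / n := by
  have hc : (univ.filter fun x : Fin (2*n) => ¬ (H ≤ (x : ℕ) ∧ (x : ℕ) + H < 2 * n)).card ≤ 2 * H := by
    have : (univ.filter fun x : Fin (2*n) => ¬ (H ≤ (x : ℕ) ∧ (x : ℕ) + H < 2 * n)).card ≤ (Finset.range (2*H)).card := by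
      apply Finset.card_le_card_of_injOn (fun x : Fin (2*n) => if (x:ℕ) < H then (x:ℕ) else H + (2 * n - 1 - x))
      · intro x hx
        simp only [Finset.coe_filter, Finset.mem_univ, true_and, Set.mem_ofPred_eq] at hx
        simp only [Finset.coe_range, Set.mem_Iio]
        split_ifs <;> omega
      · intro x hx y hy hxy
        simp only [Finset.coe_filter, Finset.mem_univ, true_and, Set.mem_ofPred_eq] at hx hy
        simp only at hxy
        apply Fin.ext; split_ifs at hxy <;> omega
    simpa using this
  refine le_trans (prob_one hn o _ _ (fun D hD => ?_)) (div_le_div_of_nonneg_right (by exact_mod_cast hc) (by positivity))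
  simp only [Finset.mem_filter, Finset.mem_univ, true_and]
  exact hD

end Chord


open scoped Classical
open Finset Filter

namespace Chord

lemma nomutual_bound {n : ℕ} (C : ChordDiagram n) (x y : Fin (2*n)) (A B : Finset (Fin (2*n)))
    (hxy : chordRep C x ≠ chordRep C y) (hAB : Disjoint A B)
    (hx : ∀ p ∈ A, C.1 p ∈ B → Crosses C x p) (hy : ∀ p ∈ A, C.1 p ∈ B → Crosses C y p) :
    Eo (fun ω => ind (¬ MutualReach (C, ω) x y)) ≤ 2 * (3/4 : ℝ) ^ NAB A B C.1 := by
  let T := A.filter fun p => C.1 p ∈ B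
  have hT : ∀ p ∈ T, p ∈ A ∧ C.1 p ∈ B := fun p hp => by simpa [T] using hp
  have hrx : ∀ p ∈ T, chordRep C p ≠ chordRep C x := by
    intro p hp h
    obtain ⟨h1, h2⟩ := rep_ne_of_crosses (hx p (hT p hp).1 (hT p hp).2)
    rw [eq_comm, chordRep_eq_iff] at h
    tauto
  have hry : ∀ p ∈ T, chordRep C p ≠ chordRep C y := by
    intro p hp h
    obtain ⟨h1, h2⟩ := rep_ne_of_crosses (hy p (hT p hp).1 (hT p hp).2)
    rw [eq_comm, chordRep_eq_iff] at h
    tauto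
  have hinj : ∀ p ∈ T, ∀ q ∈ T, p ≠ q → chordRep C p ≠ chordRep C q := by
    intro p hp q hq hpq h
    rw [chordRep_eq_iff] at h
    rcases h with h | h
    · exact hpq h.symm
    · have h1 := (hT p hp).2
      rw [← h] at h1
      exact Finset.disjoint_left.mp hAB (hT q hq).1 h1
  have e1 := Eo_nopath T (chordRep C) (chordRep C x) (chordRep C y) hxy hrx hry hinj
  have e2 := Eo_nopath T (chordRep C) (chordRep C y) (chordRep C x) hxy.symm hry hrx hinj
  have hcard : T.card = NAB A B C.1 := rfl
  have e3 : 2 * (3/4 : ℝ) ^ NAB A B C.1 = (3/4 : ℝ) ^ T.card + (3/4 : ℝ) ^ T.card := by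
    rw [hcard]; ring
  refine le_of_le_of_eq ?_ ((Eo_add _ _).trans ((congrArg₂ (· + ·) e1 e2).trans e3.symm))
  apply Eo_mono
  intro ω
  refine le_trans (ind_mono ?_) (ind_or_le _ _)
  intro h
  by_contra hc
  push Not at hc
  obtain ⟨⟨p, hp, h1, h2⟩, ⟨q, hq, h3, h4⟩⟩ := hc
  apply h
  have hxp := hx p (hT p hp).1 (hT p hp).2
  have hyp := hy p (hT p hp).1 (hT p hp).2
  have hxq := hx q (hT q hq).1 (hT q hq).2
  have hyq := hy q (hT q hq).1 (hT q hq).2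
  have o1 : OverD (C, ω) x p := ⟨hxp, h1⟩
  have o2 : OverD (C, ω) p y := ⟨crosses_symm hyp, h2⟩
  have o3 : OverD (C, ω) y q := ⟨hyq, h3⟩
  have o4 : OverD (C, ω) q x := ⟨crosses_symm hxq, h4⟩
  exact ⟨reach_trans (reach_of_over o1) (reach_of_over o2),
    reach_trans (reach_of_over o3) (reach_of_over o4)⟩

lemma arith_classes (a b c e L g : ℕ) (h1 : L ≤ a + b) (h2 : L ≤ c + e) (h3 : 4 * g ≤ a + c)
    (h4 : 4 * g ≤ b + e) (_h5 : 4 * g ≤ a + b ∨ 4 * g ≤ c + e) :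
    (min L (2*g) ≤ 2 * a ∧ 2 * g ≤ e) ∨ (min L (2*g) ≤ 2 * e ∧ 2 * g ≤ a) ∨
    (min L (2*g) ≤ 2 * b ∧ 2 * g ≤ c) ∨ (min L (2*g) ≤ 2 * c ∧ 2 * g ≤ b) := by
  omega

/-- classes of points -/
noncomputable def cl {n : ℕ} (V : Finset (Fin (2*n))) (i j t : Fin (2*n)) (a b : Prop) : Finset (Fin (2*n)) :=
  V.filter fun p => ((i < p ∧ p < j) ↔ a) ∧ (p < t ↔ b)

lemma exists_AB {n g : ℕ} (o t i j : Fin (2*n)) (ho : (o:ℕ) = 0) (ht : 4 * g + 3 ≤ (t:ℕ))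
    (ht' : (t:ℕ) + (4 * g + 3) < 2 * n) (hij : i < j) :
    ∃ A B : Finset (Fin (2*n)), A ⊆ rem (rem univ o t) i j ∧ B ⊆ rem (rem univ o t) i j ∧
      Disjoint A B ∧ (∀ p ∈ A, ∀ q ∈ B, ((i < p ∧ p < j) ↔ ¬ (i < q ∧ q < j)) ∧ (p < t ↔ ¬ q < t)) ∧
      A.card ≤ g ∧ min (min ((j:ℕ) - i) (2 * n - (j - i))) (2 * g) ≤ 2 * A.card + 4 ∧ 2 * g ≤ B.card := by
  set V := rem (rem univ o t) i j with hV
  have memV : ∀ p, p ∈ V ↔ p ≠ i ∧ p ≠ j ∧ p ≠ o ∧ p ≠ t := by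
    intro p; rw [hV, mem_rem, mem_rem]; simp
  have hij' : (i:ℕ) < j := hij
  have key : ∀ a b : Prop, ∀ a' b' : Prop, (a ↔ ¬ a') → (b ↔ ¬ b') →
      min (min ((j:ℕ) - i - 2) (2 * n - (j - i) - 3)) (2 * g) ≤ 2 * (cl V i j t a b).card →
      2 * g ≤ (cl V i j t a' b').card →
      ∃ A B : Finset (Fin (2*n)), A ⊆ V ∧ B ⊆ V ∧
      Disjoint A B ∧ (∀ p ∈ A, ∀ q ∈ B, ((i < p ∧ p < j) ↔ ¬ (i < q ∧ q < j)) ∧ (p < t ↔ ¬ q < t)) ∧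
      A.card ≤ g ∧ min (min ((j:ℕ) - i) (2 * n - (j - i))) (2 * g) ≤ 2 * A.card + 4 ∧ 2 * g ≤ B.card := by
    intro a b a' b' ha hb h1 h2
    obtain ⟨A, hA, hAc⟩ := Finset.exists_subset_card_eq (s := cl V i j t a b) (n := min (cl V i j t a b).card g) (min_le_left _ _)
    have hm : ∀ p ∈ A, ∀ q ∈ cl V i j t a' b', ((i < p ∧ p < j) ↔ ¬ (i < q ∧ q < j)) ∧ (p < t ↔ ¬ q < t) := by
      intro p hp q hq
      have hp' := hA hp
      simp only [cl, Finset.mem_filter] at hp' hq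
      exact ⟨hp'.2.1.trans (ha.trans (not_congr hq.2.1.symm)), hp'.2.2.trans (hb.trans (not_congr hq.2.2.symm))⟩
    refine ⟨A, cl V i j t a' b', hA.trans (Finset.filter_subset _ _), Finset.filter_subset _ _, ?_, hm, ?_, ?_, h2⟩
    · rw [Finset.disjoint_left]
      intro p hp hq
      exact iff_not_self (hm p hp p hq).2
    · rw [hAc]; exact min_le_right _ _
    · rw [hAc]; omega
  have hsplit : ∀ (W X Y : Finset (Fin (2*n))), (∀ p ∈ W, p ∈ X ∨ p ∈ Y) → W.card ≤ X.card + Y.card := by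
    intro W X Y h
    refine le_trans (Finset.card_le_card ?_) (Finset.card_union_le X Y)
    intro p hp
    exact Finset.mem_union.mpr (h p hp)
  have hmem : ∀ p a b, p ∈ cl V i j t a b ↔ ((p:ℕ) ≠ i ∧ (p:ℕ) ≠ j ∧ (p:ℕ) ≠ 0 ∧ (p:ℕ) ≠ t) ∧
      (((i:ℕ) < p ∧ (p:ℕ) < j) ↔ a) ∧ ((p:ℕ) < t ↔ b) := by
    intro p a b
    simp only [cl, Finset.mem_filter, memV, ne_eq, Fin.ext_iff, ho, Fin.lt_def]
  have c1 : (j:ℕ) - i - 2 ≤ (cl V i j t True True).card + (cl V i j t True False).card := by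
    have h1 := hsplit ((Finset.Ioo i j).erase t) (cl V i j t True True) (cl V i j t True False) (by
      intro p hp
      simp only [Finset.mem_erase, Finset.mem_Ioo, Fin.lt_def, ne_eq, Fin.ext_iff] at hp
      simp only [hmem, iff_true, iff_false]
      omega)
    have h5 := Finset.pred_card_le_card_erase (s := Finset.Ioo i j) (a := t)
    rw [Fin.card_Ioo] at h5
    omega
  have c2 : 2 * n - ((j:ℕ) - i) - 3 ≤ (cl V i j t False True).card + (cl V i j t False False).card := by
    have h1 := hsplit (((univ \ Finset.Icc i j).erase t).erase o) (cl V i j t False True) (cl V i j t False False) (by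
      intro p hp
      simp only [Finset.mem_erase, Finset.mem_Icc, Finset.mem_sdiff, Finset.mem_univ, true_and, Fin.le_def, ne_eq, Fin.ext_iff] at hp
      simp only [hmem, iff_true, iff_false]
      omega)
    have h5 := Finset.pred_card_le_card_erase (s := univ \ Finset.Icc i j) (a := t)
    have h6 := Finset.pred_card_le_card_erase (s := (univ \ Finset.Icc i j).erase t) (a := o)
    have h7 := Finset.le_card_sdiff (Finset.Icc i j) univ
    rw [Fin.card_Icc, Finset.card_univ, Fintype.card_fin] at h7
    omega
  have c3 : 4 * g ≤ (cl V i j t True True).card + (cl V i j t False True).card := by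
    have h1 := hsplit ((((Finset.Iio t).erase o).erase i).erase j) (cl V i j t True True) (cl V i j t False True) (by
      intro p hp
      simp only [Finset.mem_erase, Finset.mem_Iio, Fin.lt_def, ne_eq, Fin.ext_iff] at hp
      simp only [hmem, iff_true, iff_false]
      omega)
    have h5 := Finset.pred_card_le_card_erase (s := Finset.Iio t) (a := o)
    have h6 := Finset.pred_card_le_card_erase (s := (Finset.Iio t).erase o) (a := i)
    have h7 := Finset.pred_card_le_card_erase (s := ((Finset.Iio t).erase o).erase i) (a := j)
    rw [Fin.card_Iio] at h5
    omega
  have c4 : 4 * g ≤ (cl V i j t True False).card + (cl V i j t False False).card := by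
    have h1 := hsplit (((Finset.Ioi t).erase i).erase j) (cl V i j t True False) (cl V i j t False False) (by
      intro p hp
      simp only [Finset.mem_erase, Finset.mem_Ioi, Fin.lt_def, ne_eq, Fin.ext_iff] at hp
      simp only [hmem, iff_true, iff_false]
      omega)
    have h6 := Finset.pred_card_le_card_erase (s := (Finset.Ioi t)) (a := i)
    have h7 := Finset.pred_card_le_card_erase (s := ((Finset.Ioi t)).erase i) (a := j)
    rw [Fin.card_Ioi] at h6
    omega
  rcases arith_classes _ _ _ _ (min ((j:ℕ) - i - 2) (2 * n - (j - i) - 3)) g (by omega) (by omega) c3 c4 (by omega)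
    with h | h | h | h
  · exact key True True False False (by tauto) (by tauto) h.1 h.2
  · exact key False False True True (by tauto) (by tauto) h.1 h.2
  · exact key True False False True (by tauto) (by tauto) h.1 h.2
  · exact key False True True False (by tauto) (by tauto) h.1 h.2

end Chord


open scoped Classical
open Finset Filter

namespace Chord

lemma between_zero {n : ℕ} (o t p : Fin (2*n)) (ho : (o:ℕ) = 0) (hp : p ≠ o) :
    Between o t p ↔ p < t := by
  unfold Between
  simp only [min_lt_iff, lt_max_iff, ne_eq, Fin.ext_iff, Fin.lt_def, ho] at *
  omega

lemma between_lt {n : ℕ} (i j p : Fin (2*n)) (h : i < j) :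
    Between i j p ↔ (i < p ∧ p < j) := by
  unfold Between
  rw [min_eq_left h.le, max_eq_right h.le]

lemma cell_bound {n g : ℕ} (η ρ : ℝ) (hη : 0 ≤ η) (hη1 : η ≤ 4/5) (hρ : ρ = 1 - η / 4)
    (hg : 2 * η * n ≤ g)
    (o t i j : Fin (2*n)) (ho : (o:ℕ) = 0) (ht : 4 * g + 3 ≤ (t:ℕ))
    (ht' : (t:ℕ) + (4 * g + 3) < 2 * n) (hij : i < j) (hio : i ≠ o) (hit : i ≠ t) (hjt : j ≠ t) :
    ∃ a : ℕ, min (min ((j:ℕ) - i) (2 * n - (j - i))) (2 * g) ≤ 2 * a + 4 ∧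
    Eu (fun D : OrientedChordDiagram n => ind (D.1.1 o = t ∧ D.1.1 i = j ∧ ¬ MutualReach D i o))
      ≤ 2 * ρ ^ a * R n 2 := by
  obtain ⟨A, B, hA, hB, hAB, hop, hAg, hmin, hBg⟩ := exists_AB o t i j ho ht ht' hij
  refine ⟨A.card, hmin, ?_⟩
  have hot : o ≠ t := by intro h; rw [← h] at ht; omega
  have hjo : j ≠ o := by intro h; rw [h, Fin.lt_def] at hij; omega
  have memV : ∀ p, p ∈ rem (rem univ o t) i j → p ≠ i ∧ p ≠ j ∧ p ≠ o ∧ p ≠ t := by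
    intro p hp; rw [mem_rem, mem_rem] at hp; simpa using hp
  have h1 := Eu_le_of (n := n) (fun D => ind (D.1.1 o = t ∧ D.1.1 i = j ∧ ¬ MutualReach D i o))
    (fun f => if f o = t then (if f i = j then 2 * (3/4 : ℝ) ^ NAB A B f else 0) else 0) (by
      intro C
      by_cases c1 : C.1 o = t
      swap
      · simp only [c1, if_false, false_and, ind_false not_false]
        rw [Eo_const]
      by_cases c2 : C.1 i = j
      swap
      · simp only [c2, if_false, false_and, and_false, ind_false not_false]
        rw [Eo_const, ite_self]
      simp only [c1, c2, if_true, true_and]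
      have hsep : ∀ p ∈ A, C.1 p ∈ B → Crosses C i p := by
        intro p hp hq
        rw [crosses_iff, c2, between_lt _ _ _ hij, between_lt _ _ _ hij]
        intro h
        exact iff_not_self (h.symm.trans (hop p hp _ hq).1)
      have hsep2 : ∀ p ∈ A, C.1 p ∈ B → Crosses C o p := by
        intro p hp hq
        rw [crosses_iff, c1, between_zero _ _ _ ho (memV p (hA hp)).2.2.1,
          between_zero _ _ _ ho (memV _ (hB hq)).2.2.1]
        intro h
        exact iff_not_self (h.symm.trans (hop p hp _ hq).2)
      apply nomutual_bound C i o A B _ hAB hsep hsep2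
      rw [ne_eq, chordRep_eq_iff, c2]
      rintro (h | h)
      · exact hio h.symm
      · exact hjo h.symm)
  refine h1.trans ?_
  rw [← Finset.sum_filter, sum_fix (Finset.mem_univ _) (Finset.mem_univ _) hot]
  have e1 : ∀ f : Fin (2*n) → Fin (2*n), join o t f i = f i := fun f => join_apply_of_ne hio hit
  have hjV : j ∈ rem (univ : Finset (Fin (2*n))) o t := by rw [mem_rem]; exact ⟨hjo, hjt, mem_univ _⟩
  have hiV : i ∈ rem (univ : Finset (Fin (2*n))) o t := by rw [mem_rem]; exact ⟨hio, hit, mem_univ _⟩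
  simp only [e1]
  rw [← Finset.sum_filter, sum_fix hiV hjV hij.ne]
  have e2 : ∀ f : Fin (2*n) → Fin (2*n), NAB A B (join o t (join i j f)) = NAB A B f := by
    intro f
    unfold NAB
    congr 1
    apply Finset.filter_congr
    intro p hp
    obtain ⟨a1, a2, a3, a4⟩ := memV p (hA hp)
    rw [join_apply_of_ne a3 a4, join_apply_of_ne a1 a2]
  simp only [e2]
  rw [← Finset.mul_sum]
  have cV : (rem (rem univ o t) i j).card = 2 * (n - 2) := by
    have a1 := card_rem (mem_univ o) (mem_univ t) hot
    have a2 := card_rem hiV hjV hij.ne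
    rw [Finset.card_univ, Fintype.card_fin] at a1
    omega
  have h2 := mgf_bound η ρ hη hη1 hρ (n-2) _ A B cV hA hB hAB (by
    have b1 : (A.card : ℝ) ≤ g := by exact_mod_cast hAg
    have b2 : (2 * g : ℝ) ≤ B.card := by exact_mod_cast hBg
    have b3 : ((n - 2 : ℕ) : ℝ) ≤ n := by exact_mod_cast Nat.sub_le _ _
    have b4 : 2 * η * ((n - 2 : ℕ) : ℝ) ≤ 2 * η * n := mul_le_mul_of_nonneg_left b3 (by linarith)
    linarith)
  unfold R
  rw [mul_assoc, mul_div_assoc]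
  apply mul_le_mul_of_nonneg_left _ (by norm_num)
  rw [← mul_div_assoc]
  exact div_le_div_of_nonneg_right h2 (dm_pos' n).le

lemma cell_bound' {n g : ℕ} (η σ : ℝ) (hη : 0 ≤ η) (hη1 : η ≤ 4/5) (hσ0 : 0 ≤ σ) (hσ : σ ^ 2 = 1 - η / 4)
    (hg : 2 * η * n ≤ g)
    (o t i j : Fin (2*n)) (ho : (o:ℕ) = 0) (ht : 4 * g + 3 ≤ (t:ℕ))
    (ht' : (t:ℕ) + (4 * g + 3) < 2 * n) (hij : i < j) (hio : i ≠ o) (hit : i ≠ t) (hjt : j ≠ t) :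
    Eu (fun D : OrientedChordDiagram n => ind (D.1.1 o = t ∧ D.1.1 i = j ∧ ¬ MutualReach D i o))
      ≤ 4 * (σ ^ ((j:ℕ) - i) + σ ^ (i : ℕ) * σ ^ (2 * n - j) + σ ^ (2 * g)) * R n 2 := by
  obtain ⟨a, ha, hb⟩ := cell_bound η (σ^2) hη hη1 hσ hg o t i j ho ht ht' hij hio hit hjt
  refine hb.trans (mul_le_mul_of_nonneg_right ?_ (R_nonneg _ _))
  have hσ1 : σ ≤ 1 := by nlinarith
  have h4 : (1:ℝ)/2 ≤ σ ^ 4 := by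
    have : σ ^ 4 = (σ^2)^2 := by ring
    rw [this, hσ]; nlinarith
  have e : i + (2 * n - (j:ℕ)) = 2 * n - (j - i) := by
    have := i.2; have := j.2; rw [Fin.lt_def] at hij; omega
  rw [← pow_add, e]
  have h5 : σ ^ (2 * a + 4) ≤ σ ^ ((j:ℕ) - i) + σ ^ (2 * n - ((j:ℕ) - i)) + σ ^ (2 * g) := by
    have p1 := pow_nonneg hσ0 ((j:ℕ) - i)
    have p2 := pow_nonneg hσ0 (2 * n - ((j:ℕ) - i))
    have p3 := pow_nonneg hσ0 (2 * g)
    have : σ ^ (2 * a + 4) ≤ σ ^ (min (min ((j:ℕ) - i) (2 * n - (j - i))) (2 * g)) :=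
      pow_le_pow_of_le_one hσ0 hσ1 ha
    refine this.trans ?_
    rcases min_choice (min ((j:ℕ) - i) (2 * n - (j - i))) (2 * g) with h | h
    · rw [h]
      rcases min_choice ((j:ℕ) - i) (2 * n - (j - i)) with h | h <;> rw [h] <;> linarith
    · rw [h]; linarith
  have h6 : (σ ^ 2) ^ a * σ ^ 4 = σ ^ (2 * a + 4) := by ring
  have h7 : 0 ≤ (σ^2)^a := by positivity
  nlinarith

lemma geom_fin (σ : ℝ) (h0 : 0 ≤ σ) (h1 : σ < 1) (s : Finset ℕ) (k : ℕ) (hs : ∀ a ∈ s, k ≤ a) :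
    ∑ a ∈ s, σ ^ a ≤ σ ^ k * (1 - σ)⁻¹ := by
  have hS : Summable (fun a : ℕ => σ ^ k * σ ^ a) := (summable_geometric_of_lt_one h0 h1).mul_left _
  have h2 : ∑ a ∈ s, σ ^ a = ∑ b ∈ s.image (fun a => a - k), σ ^ k * σ ^ b := by
    rw [Finset.sum_image]
    · apply Finset.sum_congr rfl
      intro a ha
      rw [← pow_add]; congr 1; have := hs a ha; omega
    · intro a ha b hb hab
      have h3 := hs a ha; have h4 := hs b hb
      simp only at hab
      omega
  rw [h2, ← tsum_geometric_of_lt_one h0 h1, ← tsum_mul_left]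
  exact hS.sum_le_tsum _ (fun b _ => by positivity)

lemma geom_inj {ι : Type*} (σ : ℝ) (h0 : 0 ≤ σ) (h1 : σ < 1) (s : Finset ι) (f : ι → ℕ) (k : ℕ)
    (hf : ∀ a ∈ s, ∀ b ∈ s, f a = f b → a = b) (hs : ∀ a ∈ s, k ≤ f a) :
    ∑ a ∈ s, σ ^ (f a) ≤ σ ^ k * (1 - σ)⁻¹ := by
  have := geom_fin σ h0 h1 (s.image f) k (by simpa using hs)
  rwa [Finset.sum_image (fun a ha b hb h => hf a ha b hb h)] at this

lemma pair_sum {n K g : ℕ} (σ : ℝ) (h0 : 0 ≤ σ) (h1 : σ < 1) :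
    ∑ i : Fin (2*n), ∑ j ∈ univ.filter (fun j : Fin (2*n) => (i:ℕ) + K < j),
      (σ ^ ((j:ℕ) - i) + σ ^ (i : ℕ) * σ ^ (2 * n - j) + σ ^ (2 * g)) ≤
      2 * n * (σ ^ K * (1 - σ)⁻¹) + (1-σ)⁻¹ * (1-σ)⁻¹ + (2 * n) ^ 2 * σ ^ (2 * g) := by
  simp only [Finset.sum_add_distrib]
  have hp : 0 < (1 - σ)⁻¹ := inv_pos.mpr (by linarith)
  gcongr
  · refine (Finset.sum_le_card_nsmul univ _ (σ ^ K * (1 - σ)⁻¹) ?_).trans ?_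
    · intro i _
      apply geom_inj σ h0 h1
      · intro a ha b hb hab
        simp only [Finset.mem_filter, Finset.mem_univ, true_and] at ha hb
        apply Fin.ext; omega
      · intro a ha
        simp only [Finset.mem_filter, Finset.mem_univ, true_and] at ha
        omega
    · simp
  · simp only [← Finset.mul_sum]
    have a1 : ∀ i : Fin (2*n), σ ^ (i:ℕ) * ∑ j ∈ univ.filter (fun j : Fin (2*n) => (i:ℕ) + K < j), σ ^ (2 * n - (j:ℕ))
        ≤ σ ^ (i:ℕ) * (1 - σ)⁻¹ := by
      intro i
      apply mul_le_mul_of_nonneg_left _ (by positivity)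
      have := geom_inj σ h0 h1 (univ.filter (fun j : Fin (2*n) => (i:ℕ) + K < j)) (fun j => 2 * n - (j:ℕ)) 0 (by
        intro a _ b _ hab
        have := a.2; have := b.2
        apply Fin.ext; omega) (by simp)
      simpa using this
    refine (Finset.sum_le_sum fun i _ => a1 i).trans ?_
    rw [← Finset.sum_mul]
    apply mul_le_mul_of_nonneg_right _ hp.le
    have := geom_inj σ h0 h1 (univ : Finset (Fin (2*n))) (fun j => (j:ℕ)) 0 (by
        intro a _ b _ hab
        exact Fin.ext hab) (by simp)
    simpa using this
  · refine (Finset.sum_le_card_nsmul univ _ ((2 * n) * σ ^ (2*g)) ?_).trans ?_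
    · intro i _
      rw [Finset.sum_const, nsmul_eq_mul]
      apply mul_le_mul_of_nonneg_right _ (by positivity)
      have := Finset.card_filter_le (univ : Finset (Fin (2*n))) (fun j : Fin (2*n) => (i:ℕ) + K < j)
      rw [Finset.card_univ, Fintype.card_fin] at this
      exact_mod_cast this
    · simp only [Finset.card_univ, Fintype.card_fin, nsmul_eq_mul]
      push_cast
      apply le_of_eq; ring

lemma Eu_union {Ω ι : Type*} [Fintype Ω] (T : Finset ι) (E : Ω → Prop) (P : ι → Ω → Prop)
    (h : ∀ ω, E ω → ∃ a ∈ T, P a ω) :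
    Eu (fun ω => ind (E ω)) ≤ ∑ a ∈ T, Eu (fun ω => ind (P a ω)) := by
  rw [← Eu_sum]
  apply Eu_mono
  intro ω
  by_cases hE : E ω
  · obtain ⟨a, ha, hP⟩ := h ω hE
    rw [ind_true hE, ← ind_true hP]
    exact Finset.single_le_sum (f := fun a => ind (P a ω)) (fun a _ => ind_nonneg _) ha
  · rw [ind_false hE]
    exact Finset.sum_nonneg fun a _ => ind_nonneg _

lemma prob_long {n g K : ℕ} (η σ : ℝ) (hη : 0 < η) (hη1 : η ≤ 4/5) (hσ0 : 0 ≤ σ) (hσ : σ ^ 2 = 1 - η / 4)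
    (hg : 2 * η * n ≤ g) (hn : 4 ≤ n) (o : Fin (2*n)) (ho : (o:ℕ) = 0) :
    Eu (fun D : OrientedChordDiagram n => ind ((4 * g + 3 ≤ (D.1.1 o : ℕ) ∧ (D.1.1 o : ℕ) + (4 * g + 3) < 2 * n) ∧
      ∃ x, ¬ Short K D.1 x ∧ ¬ MutualReach D x o)) ≤
      16 * (σ ^ K * (1 - σ)⁻¹) + 8 * ((1 - σ)⁻¹ * (1 - σ)⁻¹) / n + 32 * (n * σ ^ (2 * g)) := by
  have hσ1 : σ < 1 := by nlinarith
  have hn0 : (0:ℝ) < n := by exact_mod_cast (by omega : 0 < n)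
  let Pr : Fin (2*n) → Fin (2*n) → Fin (2*n) → ℝ := fun t i j => if (4 * g + 3 ≤ (t:ℕ) ∧
      (t:ℕ) + (4 * g + 3) < 2 * n) ∧ i ≠ o ∧ i ≠ t ∧ j ≠ t then
      Eu (fun D : OrientedChordDiagram n => ind (D.1.1 o = t ∧ D.1.1 i = j ∧ ¬ MutualReach D i o)) else 0
  have hPr : ∀ t i j, 0 ≤ Pr t i j := by
    intro t i j; simp only [Pr]; split_ifs
    · exact Eu_nonneg fun D => ind_nonneg _
    · exact le_rfl
  have h1 : Eu (fun D : OrientedChordDiagram n => ind ((4 * g + 3 ≤ (D.1.1 o : ℕ) ∧ (D.1.1 o : ℕ) + (4 * g + 3) < 2 * n) ∧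
      ∃ x, ¬ Short K D.1 x ∧ ¬ MutualReach D x o)) ≤
      ∑ t : Fin (2*n), ∑ i : Fin (2*n), ∑ j ∈ univ.filter (fun j : Fin (2*n) => (i:ℕ) + K < j), Pr t i j := by
    let Q : Fin (2*n) → Fin (2*n) → Fin (2*n) → OrientedChordDiagram n → Prop := fun t i j D =>
      ((4 * g + 3 ≤ (t:ℕ) ∧ (t:ℕ) + (4 * g + 3) < 2 * n) ∧ i ≠ o ∧ i ≠ t ∧ j ≠ t) ∧
        (D.1.1 o = t ∧ D.1.1 i = j ∧ ¬ MutualReach D i o)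
    refine (Eu_union univ _ (fun t D => ∃ i : Fin (2*n), ∃ j ∈ univ.filter (fun j : Fin (2*n) => (i:ℕ) + K < j), Q t i j D) ?_).trans ?_
    · rintro D ⟨hnice, x, hx, hm⟩
      refine ⟨D.1.1 o, mem_univ _, ?_⟩
      have key : ∀ i : Fin (2*n), (i:ℕ) < D.1.1 i → ¬ Short K D.1 i → ¬ MutualReach D i o →
          ∃ i : Fin (2*n), ∃ j ∈ univ.filter (fun j : Fin (2*n) => (i:ℕ) + K < j), Q (D.1.1 o) i j D := by
        intro i hlt hi hmi
        refine ⟨i, D.1.1 i, ?_, ⟨hnice, ?_, ?_, ?_⟩, rfl, rfl, hmi⟩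
        · simp only [Finset.mem_filter, Finset.mem_univ, true_and]
          unfold Short at hi
          omega
        · rintro rfl; exact hmi (mutual_refl _ _)
        · rintro rfl; exact hmi (mutual_symm (mutual_swap _ _))
        · intro h
          have : i = o := by rw [← D.1.2.1 i, h, D.1.2.1]
          rw [this] at hmi; exact hmi (mutual_refl _ _)
      rcases lt_or_ge (x:ℕ) (D.1.1 x) with h | h
      · exact key x h hx hm
      · refine key (D.1.1 x) ?_ ?_ ?_
        · rw [D.1.2.1]
          have := D.1.2.2 x
          rw [ne_eq, Fin.ext_iff] at this
          omega
        · rw [short_swap]; exact hx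
        · intro h'; exact hm (mutual_trans (mutual_swap _ _) h')
    · apply Finset.sum_le_sum
      intro t _
      refine (Eu_union univ _ (fun (i : Fin (2*n)) D => ∃ j ∈ univ.filter (fun j : Fin (2*n) => (i:ℕ) + K < j), Q t i j D) ?_).trans ?_
      · rintro D ⟨i, hi⟩; exact ⟨i, mem_univ _, hi⟩
      apply Finset.sum_le_sum
      intro i _
      refine (Eu_union (univ.filter (fun j : Fin (2*n) => (i:ℕ) + K < j)) _ (fun j D => Q t i j D) ?_).trans ?_
      · rintro D hD; exact hD
      apply Finset.sum_le_sum
      intro j _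
      by_cases hc : (4 * g + 3 ≤ (t:ℕ) ∧ (t:ℕ) + (4 * g + 3) < 2 * n) ∧ i ≠ o ∧ i ≠ t ∧ j ≠ t
      · simp only [Pr, Q]
        rw [if_pos hc]
        exact Eu_mono fun D => ind_mono fun h => h.2
      · simp only [Pr, Q]
        rw [if_neg hc]
        have : ∀ D : OrientedChordDiagram n, ind (((4 * g + 3 ≤ (t:ℕ) ∧ (t:ℕ) + (4 * g + 3) < 2 * n) ∧ i ≠ o ∧ i ≠ t ∧ j ≠ t) ∧
          (D.1.1 o = t ∧ D.1.1 i = j ∧ ¬ MutualReach D i o)) = 0 := fun D => ind_false fun h => hc h.1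
        simp only [this]
        simp [Eu]
  refine h1.trans ?_
  have h2 : ∀ t : Fin (2*n), ∑ i : Fin (2*n), ∑ j ∈ univ.filter (fun j : Fin (2*n) => (i:ℕ) + K < j), Pr t i j ≤
      (2 * n * (σ ^ K * (1 - σ)⁻¹) + (1-σ)⁻¹ * (1-σ)⁻¹ + (2 * n) ^ 2 * σ ^ (2 * g)) * (4 * R n 2) := by
    intro t
    refine le_trans ?_ (mul_le_mul_of_nonneg_right (pair_sum (n := n) (K := K) (g := g) σ hσ0 hσ1)
      (mul_nonneg (by norm_num) (R_nonneg n 2)))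
    rw [Finset.sum_mul]
    apply Finset.sum_le_sum
    intro i _
    rw [Finset.sum_mul]
    apply Finset.sum_le_sum
    intro j hj
    simp only [Finset.mem_filter, Finset.mem_univ, true_and] at hj
    simp only [Pr]
    split_ifs with hc
    · obtain ⟨⟨c1, c2⟩, c3, c4, c5⟩ := hc
      refine (cell_bound' η σ hη.le hη1 hσ0 hσ hg o t i j ho c1 c2 (by rw [Fin.lt_def]; omega) c3 c4 c5).trans ?_
      apply le_of_eq; ring
    · exact mul_nonneg (by positivity) (mul_nonneg (by norm_num) (R_nonneg n 2))
  refine (Finset.sum_le_card_nsmul univ _ _ (fun t _ => h2 t)).trans ?_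
  simp only [Finset.card_univ, Fintype.card_fin, nsmul_eq_mul]
  have hR := R_le n 2 (by omega)
  have hp : 0 < (1 - σ)⁻¹ := inv_pos.mpr (by linarith)
  calc ((2 * n : ℕ) : ℝ) * ((2 * n * (σ ^ K * (1 - σ)⁻¹) + (1-σ)⁻¹ * (1-σ)⁻¹ + (2 * n) ^ 2 * σ ^ (2 * g)) * (4 * R n 2))
      ≤ ((2 * n : ℕ) : ℝ) * ((2 * n * (σ ^ K * (1 - σ)⁻¹) + (1-σ)⁻¹ * (1-σ)⁻¹ + (2 * n) ^ 2 * σ ^ (2 * g)) * (4 * (1 / (n:ℝ)^2))) := by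
        gcongr
    _ = _ := by
        push_cast
        field_simp
        ring

end Chord


open scoped Classical
open Finset Filter

namespace Chord

def NoInner {n : ℕ} (C : ChordDiagram n) (i j : Fin (2*n)) : Prop :=
  ∀ p, i < p → p < j → ¬ (i < C.1 p ∧ C.1 p < j)

lemma rep_left {n : ℕ} {C : ChordDiagram n} {i j : Fin (2*n)} (hC : C.1 i = j) (hij : i < j) :
    chordRep C i = i := by
  unfold chordRep; rw [hC, min_eq_left hij.le]

lemma extreme_iff {n : ℕ} {C : ChordDiagram n} {i j : Fin (2*n)} (hC : C.1 i = j) (hij : i < j)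
    (hno : NoInner C i j) (ω : Om (2*n)) :
    Extreme (C, ω) i ↔ Chord.Ext ω (Finset.Ioo i j) (chordRep C) i := by
  have hr := rep_left hC hij
  have hcr : ∀ t, i < t → t < j → Crosses C i t := by
    intro t h1 h2
    rw [crosses_iff, hC, between_lt _ _ _ hij, between_lt _ _ _ hij]
    intro h
    exact hno t h1 h2 (h.mp ⟨h1, h2⟩)
  have hrne : ∀ t, i < t → t < j → chordRep C t ≠ i := by
    intro t h1 h2 h
    have := rep_ne_of_crosses (hcr t h1 h2)
    rw [← hr, eq_comm, chordRep_eq_iff] at h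
    tauto
  have hcr' : ∀ u, Crosses C i u → ∃ t ∈ Finset.Ioo i j, chordRep C t = chordRep C u := by
    intro u hu
    rw [crosses_iff, hC, between_lt _ _ _ hij, between_lt _ _ _ hij] at hu
    by_cases h : i < u ∧ u < j
    · exact ⟨u, Finset.mem_Ioo.mpr h, rfl⟩
    · refine ⟨C.1 u, Finset.mem_Ioo.mpr ?_, chordRep_swap C u⟩
      tauto
  have e1 : (∀ u, ¬ OverD (C, ω) u i) ↔ ∀ t ∈ Finset.Ioo i j, ov ω i (chordRep C t) := by
    constructor
    · intro h t ht
      rw [Finset.mem_Ioo] at ht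
      have h1 : OverD (C, ω) i t := by
        by_contra h2
        exact h t ((over_total (hcr t ht.1 ht.2)).mpr h2)
      have := h1.2
      have h3 : ov ω (chordRep C i) (chordRep C t) := h1.2
      rwa [hr] at h3
    · intro h u hu
      have hu2 : ov ω (chordRep C u) (chordRep C i) := hu.2
      obtain ⟨t, ht, htu⟩ := hcr' u (crosses_symm hu.1)
      have h1 := h t ht
      rw [Finset.mem_Ioo] at ht
      rw [← htu, hr] at hu2
      exact (ov_symm ω (hrne t ht.1 ht.2).symm).mp hu2 h1
  have e2 : (∀ u, ¬ OverD (C, ω) i u) ↔ ∀ t ∈ Finset.Ioo i j, ov ω (chordRep C t) i := by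
    constructor
    · intro h t ht
      rw [Finset.mem_Ioo] at ht
      have h1 : OverD (C, ω) t i := (over_total (D := (C, ω)) (hcr t ht.1 ht.2)).mpr (h t)
      have h3 : ov ω (chordRep C t) (chordRep C i) := h1.2
      rwa [hr] at h3
    · intro h u hu
      have hu2 : ov ω (chordRep C i) (chordRep C u) := hu.2
      obtain ⟨t, ht, htu⟩ := hcr' u hu.1
      have h1 := h t ht
      rw [Finset.mem_Ioo] at ht
      rw [← htu, hr] at hu2
      exact (ov_symm ω (hrne t ht.1 ht.2).symm).mp h1 hu2 |>.elim
  unfold Extreme Chord.Ext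
  rw [e1, e2]
  exact or_comm

lemma Eo_extremes {n r : ℕ} {C : ChordDiagram n} {i j : Fin r → Fin (2*n)} (hC : ∀ k, C.1 (i k) = j k)
    (hij : ∀ k, i k < j k) (hd : ∀ k l, k ≠ l → j k < i l ∨ j l < i k)
    (hno : ∀ k, NoInner C (i k) (j k)) :
    Eo (fun ω => ind (∀ k, Extreme (C, ω) (i k))) = ∏ k, wt ((j k : ℕ) - i k - 1) := by
  have e1 : ∀ ω, ind (∀ k, Extreme (C, ω) (i k)) =
      ∏ k, ind (Chord.Ext ω (Finset.Ioo (i k) (j k)) (chordRep C) (i k)) := by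
    intro ω
    rw [← ind_forall]
    congr 1
    apply propext
    constructor
    · intro h k _; exact (extreme_iff (hC k) (hij k) (hno k) ω).mp (h k)
    · intro h k; exact (extreme_iff (hC k) (hij k) (hno k) ω).mpr (h k (mem_univ _))
  have hrne : ∀ k t, t ∈ Finset.Ioo (i k) (j k) → ∀ l, chordRep C t ≠ i l := by
    intro k t ht l h
    rw [Finset.mem_Ioo] at ht
    rw [← rep_left (hC l) (hij l), eq_comm, chordRep_eq_iff, hC l] at h
    have h1 := hij l
    by_cases hkl : k = l
    · subst hkl
      rcases h with rfl | rfl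
      · exact lt_irrefl _ ht.1
      · exact lt_irrefl _ ht.2
    · rcases hd k l hkl with h2 | h2
      · rcases h with rfl | rfl
        · exact lt_irrefl _ (ht.2.trans h2)
        · exact lt_irrefl _ ((ht.2.trans h2).trans h1)
      · rcases h with rfl | rfl
        · exact lt_irrefl _ ((ht.1.trans h1).trans h2)
        · exact lt_irrefl _ (ht.1.trans h2)
  rw [Eo_congr e1, Eo_prod univ (fun k ω => ind (Chord.Ext ω (Finset.Ioo (i k) (j k)) (chordRep C) (i k)))
    (fun k => {e | ∃ t ∈ Finset.Ioo (i k) (j k), e = s(i k, chordRep C t)}) (fun k _ => Dep_ext _ _ _)]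
  · apply Finset.prod_congr rfl
    intro k _
    rw [Eo_ext _ _ _ (fun t ht => hrne k t ht k), Fin.card_Ioo]
    intro t ht u hu htu h
    rw [chordRep_eq_iff] at h
    rw [Finset.mem_Ioo] at ht hu
    rcases h with h | h
    · exact htu h.symm
    · rw [h] at hu
      exact hno k t ht.1 ht.2 hu
  · intro k _ l _ hkl
    rw [Set.disjoint_left]
    rintro e ⟨t, ht, rfl⟩ ⟨u, hu, h⟩
    rw [Sym2.eq_iff] at h
    rcases h with ⟨h1, _⟩ | ⟨_, h2⟩
    · have a1 := hij k; have a2 := hij l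
      rcases hd k l hkl with h | h
      · rw [← h1] at h; exact lt_irrefl _ (h.trans a1)
      · rw [h1] at h; exact lt_irrefl _ (h.trans a2)
    · exact hrne k t ht l h2

/-- one tuple of disjoint arcs -/
lemma good_tuple {n r K : ℕ} {i j : Fin r → Fin (2*n)}
    (hij : ∀ k, i k < j k) (hK : ∀ k, (j k : ℕ) ≤ i k + K)
    (hd : ∀ k l, k ≠ l → j k < i l ∨ j l < i k) :
    |Eu (fun D : OrientedChordDiagram n => ind (∀ k, D.1.1 (i k) = j k ∧ Extreme D (i k)))
      - R n r * ∏ k, wt ((j k : ℕ) - i k - 1)| ≤ (r * K * K : ℕ) * R n (r+1) := by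
  set w := ∏ k, wt ((j k : ℕ) - i k - 1) with hw
  have hw0 : 0 ≤ w := Finset.prod_nonneg fun k _ => wt_nonneg _
  have hw1 : w ≤ 1 := Finset.prod_le_one (fun k _ => wt_nonneg _) fun k _ => wt_le_one _
  have hne : ∀ k l, k ≠ l → i k ≠ i l ∧ i k ≠ j l ∧ j k ≠ i l ∧ j k ≠ j l := by
    intro k l hkl
    have a1 := hij k; have a2 := hij l
    simp only [Fin.lt_def, ne_eq, Fin.ext_iff] at *
    rcases hd k l hkl with h | h <;> omega
  have hR : Eu (fun D : OrientedChordDiagram n => ind (∀ k, D.1.1 (i k) = j k)) = R n r := by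
    rw [← count_fixed_eq (fun k => (i k, j k)) hij hne, Eu_split, ]
    congr 1
    simp only [Eo_const]
    rw [sum_diagram (fun f => ind (∀ k, f (i k) = j k)), Finset.card_filter]
    push_cast
    apply Finset.sum_congr rfl
    intro f _
    unfold ind; congr
  have hin : Eu (fun D : OrientedChordDiagram n => ind ((∀ k, D.1.1 (i k) = j k) ∧
      ∃ k, ¬ NoInner D.1 (i k) (j k))) ≤ (r * K * K : ℕ) * R n (r+1) := by
    let T : Finset (Fin r × Fin (2*n) × Fin (2*n)) := univ.filter fun t =>
      i t.1 < t.2.1 ∧ t.2.1 < t.2.2 ∧ t.2.2 < j t.1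
    have hT : T.card ≤ r * K * K := by
      have : T.card ≤ (univ : Finset (Fin r × Fin K × Fin K)).card := by
        by_cases hK0 : K = 0
        · have : T = ∅ := by
            rw [Finset.filter_eq_empty_iff]
            rintro ⟨k, p, q⟩ _ h
            have := hK k; simp only [Fin.lt_def] at h; omega
          rw [this]; simp
        have hKp : 0 < K := by omega
        apply Finset.card_le_card_of_injOn (fun t : Fin r × Fin (2*n) × Fin (2*n) =>
          (t.1, (⟨((t.2.1:ℕ) - i t.1) % K, Nat.mod_lt _ hKp⟩ : Fin K), (⟨((t.2.2:ℕ) - i t.1) % K, Nat.mod_lt _ hKp⟩ : Fin K)))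
        · intro t _; simp
        · rintro ⟨k, p, q⟩ ht ⟨k', p', q'⟩ ht' he
          simp only [T, Finset.coe_filter, Finset.mem_univ, true_and, Set.mem_ofPred_eq, Fin.lt_def] at ht ht'
          simp only [Prod.mk.injEq, Fin.mk.injEq] at he
          obtain ⟨rfl, h1, h2⟩ := he
          have := hK k
          rw [Nat.mod_eq_of_lt (by omega), Nat.mod_eq_of_lt (by omega)] at h1 h2
          simp only [Prod.mk.injEq, Fin.ext_iff, true_and]
          omega
      refine this.trans (le_of_eq ?_)
      simp only [Finset.card_univ, Fintype.card_prod, Fintype.card_fin]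
      ring
    refine le_trans (prob_union (r := r+1) T (fun t => Fin.cons (t.2.1, t.2.2) (fun k => (i k, j k))) ?_ ?_ _ ?_)
      (mul_le_mul_of_nonneg_right (by exact_mod_cast hT) (R_nonneg _ _))
    · intro t ht k
      simp only [T, Finset.mem_filter, Finset.mem_univ, true_and] at ht
      refine Fin.cases ?_ (fun k => ?_) k
      · exact ht.2.1
      · exact hij k
    · rintro ⟨k, p, q⟩ ht
      simp only [T, Finset.mem_filter, Finset.mem_univ, true_and] at ht
      rw [Fin.cons_injective_iff]
      constructor
      · rintro ⟨l, hl⟩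
        simp only [Prod.mk.injEq] at hl
        have a1 := hij k; have a2 := hij l
        rw [← hl.1] at ht
        by_cases hkl : k = l
        · subst hkl; exact lt_irrefl _ ht.1
        · simp only [Fin.lt_def] at *
          rcases hd k l hkl with h | h <;> omega
      · intro k l hkl
        by_contra hc
        simp only [Prod.mk.injEq] at hkl
        exact (hne k l hc).1 hkl.1
    · rintro D ⟨hf, k, hk⟩
      unfold NoInner at hk
      push Not at hk
      obtain ⟨p, h1, h2, h3, h4⟩ := hk
      have fin : ∀ p, i k < p → D.1.1 p < j k → p < D.1.1 p → ∃ t ∈ T, ∀ l, D.1.1 ((Fin.cons (t.2.1, t.2.2) (fun k => (i k, j k)) : Fin (r+1) → Fin (2*n) × Fin (2*n)) l).1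
          = ((Fin.cons (t.2.1, t.2.2) (fun k => (i k, j k)) : Fin (r+1) → Fin (2*n) × Fin (2*n)) l).2 := by
        intro p b1 b2 b3
        refine ⟨(k, p, D.1.1 p), ?_, ?_⟩
        · simp only [T, Finset.mem_filter, Finset.mem_univ, true_and]; exact ⟨b1, b3, b2⟩
        · intro l
          refine Fin.cases ?_ (fun l => ?_) l
          · rfl
          · exact hf l
      rcases lt_or_gt_of_ne (D.1.2.2 p) with h | h
      · exact fin (D.1.1 p) h3 (by rw [D.1.2.1]; exact h2) (by rw [D.1.2.1]; exact h)
      · exact fin p h1 h4 h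
  refine le_trans ?_ hin
  have hmain : ∀ C : ChordDiagram n, |Eo (fun ω => ind (∀ k, C.1 (i k) = j k ∧ Extreme (C, ω) (i k)))
      - w * Eo (fun _ : Om (2*n) => ind (∀ k, C.1 (i k) = j k))| ≤
      Eo (fun _ : Om (2*n) => ind ((∀ k, C.1 (i k) = j k) ∧ ∃ k, ¬ NoInner C (i k) (j k))) := by
    intro C
    rw [Eo_const, Eo_const]
    by_cases hf : ∀ k, C.1 (i k) = j k
    · have e : ∀ ω : Om (2*n), ind (∀ k, C.1 (i k) = j k ∧ Extreme (C, ω) (i k)) = ind (∀ k, Extreme (C, ω) (i k)) := by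
        intro ω; congr 1; apply propext
        exact ⟨fun h k => (h k).2, fun h k => ⟨hf k, h k⟩⟩
      rw [Eo_congr e, ind_true hf, mul_one]
      by_cases hno : ∀ k, NoInner C (i k) (j k)
      · rw [Eo_extremes hf hij hd hno, ← hw, sub_self, abs_zero]; exact ind_nonneg _
      · have hno' : ∃ k, ¬ NoInner C (i k) (j k) := by push Not at hno; exact hno
        rw [ind_true ⟨hf, hno'⟩]
        have b1 : 0 ≤ Eo (fun ω : Om (2*n) => ind (∀ k, Extreme (C, ω) (i k))) := by
          rw [← Eo_const (N := 2 * n) 0]; exact Eo_mono fun ω => ind_nonneg _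
        have b2 : Eo (fun ω : Om (2*n) => ind (∀ k, Extreme (C, ω) (i k))) ≤ 1 := by
          have := Eo_mono (N := 2*n) (f := fun ω => ind (∀ k, Extreme (C, ω) (i k))) (g := fun _ => 1) fun ω => ind_le_one _
          rwa [Eo_const] at this
        rw [abs_le]; constructor <;> linarith
    · have e : ∀ ω : Om (2*n), ind (∀ k, C.1 (i k) = j k ∧ Extreme (C, ω) (i k)) = 0 := by
        intro ω; exact ind_false fun h => hf fun k => (h k).1
      rw [Eo_congr e, Eo_const, ind_false hf, mul_zero, sub_zero, abs_zero]
      exact ind_nonneg _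
  rw [← hR, mul_comm _ w, Eu_split, Eu_split, Eu_split, ← mul_div_assoc, ← sub_div, Finset.mul_sum, ← Finset.sum_sub_distrib, abs_div,
    abs_of_pos (dm_pos' n)]
  apply div_le_div_of_nonneg_right _ (dm_pos' n).le
  exact (Finset.abs_sum_le_sum_abs _ _).trans (Finset.sum_le_sum fun C _ => hmain C)

end Chord


open scoped Classical
open Finset Filter

namespace Chord

lemma desc_sum {X : Type*} [Fintype X] (P : X → Prop) (r : ℕ) :
    (((univ.filter P).card.descFactorial r : ℕ) : ℝ) =
      ∑ s : Fin r → X, ind (Function.Injective s ∧ ∀ k, P (s k)) := by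
  have h1 : (univ.filter P).card.descFactorial r = Fintype.card (Fin r ↪ {x // P x}) := by
    rw [Fintype.card_embedding_eq, Fintype.card_fin, Fintype.card_subtype]
  have e : (Fin r ↪ {x // P x}) ≃ {s : Fin r → X // Function.Injective s ∧ ∀ k, P (s k)} :=
    { toFun := fun f => ⟨fun k => (f k).1, fun a b h => f.injective (Subtype.ext h), fun k => (f k).2⟩
      invFun := fun s => ⟨fun k => ⟨s.1 k, s.2.2 k⟩, fun a b h => s.2.1 (by simpa using h)⟩
      left_inv := fun f => by ext; rfl
      right_inv := fun s => by ext; rfl }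
  rw [h1, Fintype.card_congr e, Fintype.card_subtype, Finset.card_filter]
  push_cast
  apply Finset.sum_congr rfl
  intro x _
  unfold ind
  congr

lemma count_bad {N K r : ℕ} (l : Fin r) (c : ℕ) (B : Finset (Fin r → Fin N × Fin K))
    (ψ : (Fin r → Fin N × Fin K) → ℕ) (hψ : ∀ s ∈ B, ψ s < c)
    (h : ∀ s ∈ B, ∀ t ∈ B, (∀ k, k ≠ l → s k = t k) → ψ s = ψ t → (s l).1 = (t l).1) :
    B.card * (N * K) ≤ c * K * (N * K) ^ r := by
  have h1 : B.card ≤ ((univ : Finset ({k // k ≠ l} → Fin N × Fin K)) ×ˢ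
      (range c ×ˢ (univ : Finset (Fin K)))).card := by
    apply Finset.card_le_card_of_injOn (fun s => (fun k => s k.1, (ψ s, (s l).2)))
    · intro s hs
      have := hψ s hs
      simp [this]
    · intro s hs t ht hst
      simp only [Prod.mk.injEq] at hst
      obtain ⟨a, b, d⟩ := hst
      have a' : ∀ k, k ≠ l → s k = t k := fun k hk => congrFun a ⟨k, hk⟩
      funext k
      by_cases hk : k = l
      · subst hk
        exact Prod.ext (h s hs t ht a' b) d
      · exact a' k hk
  have h2 : Fintype.card {k // k ≠ l} + 1 = r := by
    have := Fintype.card_subtype_compl (fun k => k = l)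
    simp only [Fintype.card_fin, Fintype.card_unique] at this
    have hr := l.2
    simp only [ne_eq]
    rw [this]; omega
  rw [Finset.card_product, Finset.card_product, Finset.card_univ, Finset.card_univ, Finset.card_range,
    Fintype.card_fun, Fintype.card_prod, Fintype.card_fin, Fintype.card_fin] at h1
  calc B.card * (N*K) ≤ (N*K)^(Fintype.card {k // k ≠ l}) * (c * K) * (N * K) := Nat.mul_le_mul_right _ h1
    _ = c * K * (N*K)^(Fintype.card {k // k ≠ l} + 1) := by ring
    _ = _ := by rw [h2]

/-- configuration property -/
def GoodS {N K r : ℕ} (s : Fin r → Fin N × Fin K) : Prop :=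
  (∀ k, ((s k).1:ℕ) + (s k).2 + 1 < N) ∧
  ∀ k l, k ≠ l → ((s k).1:ℕ) + (s k).2 + 1 < (s l).1 ∨ ((s l).1:ℕ) + (s l).2 + 1 < (s k).1

lemma card_bad (N K r : ℕ) :
    (univ.filter fun s : Fin r → Fin N × Fin K => ¬ GoodS s).card * (N * K) ≤
      (r * (K * K) + r * r * ((2*K+1) * K)) * (N*K)^r := by
  set A : Fin r → Finset (Fin r → Fin N × Fin K) := fun k =>
    univ.filter fun s => N ≤ ((s k).1:ℕ) + (s k).2 + 1 with hA
  set B : Fin r × Fin r → Finset (Fin r → Fin N × Fin K) := fun q =>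
    univ.filter fun s => q.1 ≠ q.2 ∧ ((s q.1).1:ℕ) ≤ (s q.2).1 + K ∧ ((s q.2).1:ℕ) ≤ (s q.1).1 + K with hB
  have hsub : (univ.filter fun s : Fin r → Fin N × Fin K => ¬ GoodS s) ⊆
      univ.biUnion A ∪ univ.biUnion B := by
    intro s hs
    simp only [mem_filter, mem_univ, true_and, GoodS, not_and_or, not_forall, not_lt] at hs
    simp only [mem_union, mem_biUnion, mem_univ, true_and, hA, hB, mem_filter]
    rcases hs with ⟨k, hk⟩ | ⟨k, l, hkl, h⟩
    · exact Or.inl ⟨k, hk⟩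
    · right
      have h1 := (s k).2.2
      have h2 := (s l).2.2
      refine ⟨(k, l), hkl, ?_, ?_⟩ <;> simp only <;> omega
  have hAc : ∀ k, (A k).card * (N*K) ≤ K * K * (N*K)^r := by
    intro k
    apply count_bad k K (A k) (fun s => N - 1 - (s k).1)
    · intro s hs
      simp only [hA, mem_filter, mem_univ, true_and] at hs
      have := (s k).2.2
      have := (s k).1.2
      omega
    · intro s hs t ht _ h
      have := (s k).1.2
      have := (t k).1.2
      apply Fin.ext; omega
  have hBc : ∀ q, (B q).card * (N*K) ≤ (2*K+1) * K * (N*K)^r := by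
    intro q
    apply count_bad q.2 (2*K+1) (B q) (fun s => (s q.2).1 + K - (s q.1).1)
    · intro s hs
      simp only [hB, mem_filter, mem_univ, true_and] at hs
      omega
    · intro s hs t ht h0 h
      simp only [hB, mem_filter, mem_univ, true_and] at hs ht
      rw [h0 q.1 hs.1] at h hs
      apply Fin.ext; omega
  have h1 : (univ.filter fun s : Fin r → Fin N × Fin K => ¬ GoodS s).card ≤
      ∑ k, (A k).card + ∑ q, (B q).card :=
    (Finset.card_le_card hsub).trans ((Finset.card_union_le _ _).trans
      (Nat.add_le_add Finset.card_biUnion_le Finset.card_biUnion_le))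
  calc _ ≤ (∑ k, (A k).card + ∑ q, (B q).card) * (N*K) := Nat.mul_le_mul_right _ h1
    _ = ∑ k, (A k).card * (N*K) + ∑ q, (B q).card * (N*K) := by
      rw [add_mul, Finset.sum_mul, Finset.sum_mul]
    _ ≤ ∑ k : Fin r, K * K * (N*K)^r + ∑ q : Fin r × Fin r, (2*K+1) * K * (N*K)^r :=
      Nat.add_le_add (Finset.sum_le_sum fun k _ => hAc k) (Finset.sum_le_sum fun q _ => hBc q)
    _ = _ := by
      rw [Finset.sum_const, Finset.sum_const, Finset.card_univ, Finset.card_univ, Fintype.card_prod,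
        Fintype.card_fin, smul_eq_mul, smul_eq_mul]; ring

/-- The event for one pair. -/
def Ev {K n : ℕ} (D : OrientedChordDiagram n) (x : Fin (2*n) × Fin K) : Prop :=
  (D.1.1 x.1 : ℕ) = x.1 + x.2 + 1 ∧ Extreme D x.1

lemma ev_bound {K n r : ℕ} (s : Fin r → Fin (2*n) × Fin K) :
    Eu (fun D : OrientedChordDiagram n => ind (Function.Injective s ∧ ∀ k, Ev D (s k))) ≤ R n r := by
  by_cases h : Function.Injective s ∧ ∀ k, ((s k).1:ℕ) + (s k).2 + 1 < 2*n
  · have := prob_union (r := r) (n := n) ({()} : Finset Unit)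
      (fun _ k => ((s k).1, ⟨((s k).1:ℕ) + (s k).2 + 1, h.2 k⟩)) ?_ ?_
      (fun D => Function.Injective s ∧ ∀ k, Ev D (s k)) ?_
    · simpa using this
    · intro t _ k
      rw [Fin.lt_def]; simp only; omega
    · intro t _ a b hab
      simp only [Prod.mk.injEq, Fin.mk.injEq] at hab
      apply h.1
      apply Prod.ext hab.1
      apply Fin.ext
      have := hab.2
      rw [hab.1] at this
      omega
    · intro D hD
      refine ⟨(), by simp, fun k => Fin.ext (hD.2 k).1⟩
  · have : ∀ D : OrientedChordDiagram n, ind (Function.Injective s ∧ ∀ k, Ev D (s k)) = 0 := by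
      intro D
      apply ind_false
      rintro ⟨h1, h2⟩
      apply h
      refine ⟨h1, fun k => ?_⟩
      rw [← (h2 k).1]; exact (D.1.1 (s k).1).2
    simp only [this]
    unfold Eu
    simp [R_nonneg]

lemma ev_good {K n r : ℕ} (s : Fin r → Fin (2*n) × Fin K) (hs : GoodS s) :
    |Eu (fun D : OrientedChordDiagram n => ind (Function.Injective s ∧ ∀ k, Ev D (s k))) -
      R n r * ∏ k, wt (s k).2| ≤ (r*K*K:ℕ) * R n (r+1) := by
  have := good_tuple (n := n) (r := r) (K := K) (i := fun k => (s k).1)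
    (j := fun k => ⟨((s k).1:ℕ) + (s k).2 + 1, hs.1 k⟩) ?_ ?_ ?_
  · refine le_trans (le_of_eq ?_) this
    congr 2
    · congr 1
      funext D
      congr 1
      apply propext
      constructor
      · rintro ⟨_, h⟩ k
        exact ⟨Fin.ext (h k).1, (h k).2⟩
      · intro h
        refine ⟨?_, fun k => ⟨by rw [(h k).1], (h k).2⟩⟩
        intro a b hab
        by_contra hne
        have := hs.2 a b hne
        rw [hab] at this
        omega
    · congr 1
      apply Finset.prod_congr rfl
      intro k _
      congr 1
      simp only; omega
  · intro k; rw [Fin.lt_def]; simp only; omega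
  · intro k; simp only; have := (s k).2.2; omega
  · intro k l hkl
    rcases hs.2 k l hkl with h | h
    · left; rw [Fin.lt_def]; exact h
    · right; rw [Fin.lt_def]; exact h

noncomputable def lam (K : ℕ) : ℝ := ∑ c : Fin K, wt c

lemma TK_moment (K n r : ℕ) :
    |Eu (fun D : OrientedChordDiagram n => ((TK K n D).descFactorial r : ℝ)) - R n r * (2 * n * lam K) ^ r| ≤
     (2*n*K:ℝ)^r * ((r*K*K:ℕ) * R n (r+1)) +
      (univ.filter fun s : Fin r → Fin (2*n) × Fin K => ¬ GoodS s).card * R n r := by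
  have e1 : Eu (fun D : OrientedChordDiagram n => ((TK K n D).descFactorial r : ℝ)) =
      ∑ s : Fin r → Fin (2*n) × Fin K,
        Eu (fun D : OrientedChordDiagram n => ind (Function.Injective s ∧ ∀ k, Ev D (s k))) := by
    rw [← Eu_sum]
    congr 1
    funext D
    rw [← desc_sum]
    unfold TK Ev; congr
  have e2 : R n r * (2 * n * lam K) ^ r = ∑ s : Fin r → Fin (2*n) × Fin K, R n r * ∏ k, wt (s k).2 := by
    rw [← Finset.mul_sum]
    congr 1
    have := Finset.sum_prod_piFinset (κ := Fin (2*n) × Fin K) (ι := Fin r) univ (fun _ x => wt x.2)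
    rw [Fintype.piFinset_univ] at this
    rw [this]
    rw [Finset.prod_const, Finset.card_univ, Fintype.card_fin, Fintype.sum_prod_type]
    simp only [Finset.sum_const, Finset.card_univ, Fintype.card_fin, nsmul_eq_mul, lam]
    push_cast; rfl
  rw [e1, e2, ← Finset.sum_sub_distrib]
  refine (Finset.abs_sum_le_sum_abs _ _).trans ?_
  have hterm : ∀ s : Fin r → Fin (2*n) × Fin K,
      |Eu (fun D : OrientedChordDiagram n => ind (Function.Injective s ∧ ∀ k, Ev D (s k))) -
      R n r * ∏ k, wt (s k).2| ≤ (r*K*K:ℕ) * R n (r+1) + (if ¬ GoodS s then R n r else 0) := by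
    intro s
    have hR := R_nonneg n (r+1)
    have hR' := R_nonneg n r
    by_cases hs : GoodS s
    · rw [if_neg (by simpa using hs), add_zero]; exact ev_good s hs
    · rw [if_pos hs]
      have h1 := ev_bound (n := n) s
      have h2 : 0 ≤ Eu (fun D : OrientedChordDiagram n => ind (Function.Injective s ∧ ∀ k, Ev D (s k))) :=
        Eu_nonneg fun D => ind_nonneg _
      have h3 : 0 ≤ ∏ k, wt (s k).2 := Finset.prod_nonneg fun k _ => wt_nonneg _
      have h4 : ∏ k, wt (s k).2 ≤ 1 := Finset.prod_le_one (fun k _ => wt_nonneg _) fun k _ => wt_le_one _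
      have h5 : R n r * ∏ k, wt (s k).2 ≤ R n r := mul_le_of_le_one_right hR' h4
      have h6 : 0 ≤ R n r * ∏ k, wt (s k).2 := mul_nonneg hR' h3
      have h7 : 0 ≤ (r*K*K:ℕ) * R n (r+1) := by positivity
      rw [abs_le]; constructor <;> linarith
  refine (Finset.sum_le_sum fun s _ => hterm s).trans (le_of_eq ?_)
  rw [Finset.sum_add_distrib, ← Finset.sum_filter, Finset.sum_const, Finset.sum_const, Finset.card_univ,
    Fintype.card_fun, Fintype.card_prod, Fintype.card_fin, Fintype.card_fin, Fintype.card_fin,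
    nsmul_eq_mul, nsmul_eq_mul]
  push_cast; ring

lemma TK_moment_tendsto (K : ℕ) (hK : 1 ≤ K) (r : ℕ) :
    Tendsto (fun n => Eu (fun D : OrientedChordDiagram n => ((TK K n D).descFactorial r : ℝ)))
      atTop (nhds (lam K ^ r)) := by
  set c : ℝ := (2*K:ℝ)^r * (r*K*K:ℕ) + ((r * (K * K) + r * r * ((2*K+1) * K) : ℕ) : ℝ) * (2*K:ℝ)^r with hc
  have h1 : Tendsto (fun n : ℕ => R n r * (2*n*lam K)^r) atTop (nhds (lam K ^ r)) := by
    have := (R_tendsto r).mul_const (lam K ^ r)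
    rw [one_mul] at this
    refine this.congr fun n => ?_
    rw [mul_pow (2 * (n:ℝ)) (lam K)]; ring
  have h2 : Tendsto (fun n : ℕ => c / n) atTop (nhds 0) := tendsto_const_div_atTop_nhds_zero_nat c
  have h3 : Tendsto (fun n : ℕ => Eu (fun D : OrientedChordDiagram n => ((TK K n D).descFactorial r : ℝ)) -
      R n r * (2*n*lam K)^r) atTop (nhds 0) := by
    apply squeeze_zero_norm' _ h2
    filter_upwards [eventually_ge_atTop (2*(r+1))] with n hn
    rw [Real.norm_eq_abs]
    refine (TK_moment K n r).trans ?_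
    have hn0 : (0:ℝ) < n := by
      have : 0 < n := by omega
      exact_mod_cast this
    have hK0 : (1:ℝ) ≤ K := by exact_mod_cast hK
    have r1 := R_le n (r+1) hn
    have r2 := R_le n r (by omega)
    have hb := card_bad (2*n) K r
    set b := (univ.filter fun s : Fin r → Fin (2*n) × Fin K => ¬ GoodS s).card
    have hb' : (b:ℝ) * (2*n*K) ≤ ((r * (K * K) + r * r * ((2*K+1) * K) : ℕ) : ℝ) * (2*n*K:ℝ)^r := by
      exact_mod_cast hb
    set q : ℝ := ((r * (K * K) + r * r * ((2*K+1) * K) : ℕ) : ℝ)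
    have hb2 : (b:ℝ) ≤ q * (2*K)^r * n^r / n := by
      rw [le_div_iff₀ hn0]
      have e : q * (2*K:ℝ)^r * n^r = q * (2*n*K:ℝ)^r := by
        rw [mul_assoc, ← mul_pow]; congr 2; ring
      rw [e]
      refine le_trans ?_ hb'
      apply mul_le_mul_of_nonneg_left _ (by positivity)
      nlinarith
    have t1 : (2*n*K:ℝ)^r * ((r*K*K:ℕ) * R n (r+1)) ≤ (2*n*K:ℝ)^r * ((r*K*K:ℕ) * (1/(n:ℝ)^(r+1))) := by
      gcongr
    have t2 : (b:ℝ) * R n r ≤ (q * (2*K)^r * n^r / n) * (1/(n:ℝ)^r) := by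
      apply mul_le_mul hb2 r2 (R_nonneg _ _)
      have : 0 ≤ q := Nat.cast_nonneg _
      positivity
    refine (add_le_add t1 t2).trans (le_of_eq ?_)
    rw [hc, show (2*n*K:ℝ) = (2*K)*n by ring, mul_pow (2*(K:ℝ)) (n:ℝ) r, pow_succ]
    have : (n:ℝ)^r ≠ 0 := by positivity
    field_simp
  have := h3.add h1
  rw [zero_add] at this
  refine this.congr fun n => ?_
  ring

lemma TK_poisson (K : ℕ) (hK : 1 ≤ K) (m : ℕ) :
    Tendsto (fun n => Eu (fun D : OrientedChordDiagram n => ind (TK K n D = m))) atTop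
      (nhds (Real.exp (-lam K) * lam K ^ m / (m.factorial : ℝ))) :=
  moments (Ω := fun n => OrientedChordDiagram n) (fun n D => TK K n D) (lam K) (TK_moment_tendsto K hK) m

lemma lam_eq (K : ℕ) : lam (K+1) = 3 - 2 * (1/2)^K := by
  unfold lam
  induction K with
  | zero => simp [wt]; norm_num
  | succ K ih =>
    rw [Fin.sum_univ_castSucc]
    simp only [Fin.val_castSucc, Fin.val_last]
    rw [ih, wt, if_neg (by omega), pow_succ]; ring

lemma lam_tendsto : Tendsto lam atTop (nhds 3) := by
  rw [← tendsto_add_atTop_iff_nat 1]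
  have h := (tendsto_pow_atTop_nhds_zero_of_lt_one (r := (1/2:ℝ)) (by norm_num) (by norm_num)).const_mul 2
  have h2 := h.const_sub 3
  simp only [mul_zero, sub_zero] at h2
  exact h2.congr fun K => (lam_eq K).symm

end Chord


open scoped Classical
open Finset Filter

namespace Chord

lemma bad_prob {n g K : ℕ} (η σ : ℝ) (h0 : 0 < η) (h1 : η ≤ 4/5) (h2 : 0 ≤ σ) (h3 : σ^2 = 1 - η/4)
    (hg : 2*η*n ≤ g) (hn : 4 ≤ n) (hK : 1 ≤ K) :
    ∃ o p : Fin (2*n), Eu (fun D : OrientedChordDiagram n => ind (¬ Good K n D o p)) ≤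
      (8*g+6)/n + (16*(σ^K*(1-σ)⁻¹) + 8*((1-σ)⁻¹*(1-σ)⁻¹)/n + 32*(n*σ^(2*g)))
      + 2*(2*K+1)^3/n + 2*(2*K+1)/n := by
  refine ⟨⟨0, by omega⟩, ⟨1, by omega⟩, ?_⟩
  set o : Fin (2*n) := ⟨0, by omega⟩ with ho
  set p : Fin (2*n) := ⟨1, by omega⟩ with hp
  have e1 := prob_nocross K n
  have e2 := prob_short K n (by omega) o
  have e3 := prob_short K n (by omega) p
  have e4 := prob_nice (4*g+3) n (by omega) o
  have e5 := prob_long (K := K) η σ h0 h1 h2 h3 hg hn o rfl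
  have hn0 : (0:ℝ) < n := by
    have : 0 < n := by omega
    exact_mod_cast this
  have e1' : ((2*n*(2*K+1)^3 : ℕ):ℝ) * R n 2 ≤ 2*(2*K+1)^3/n := by
    have := R_le n 2 (by omega)
    calc ((2*n*(2*K+1)^3 : ℕ):ℝ) * R n 2 ≤ ((2*n*(2*K+1)^3 : ℕ):ℝ) * (1/(n:ℝ)^2) := by gcongr
      _ = _ := by push_cast; field_simp
  have key : Eu (fun D : OrientedChordDiagram n => ind (¬ Good K n D o p)) ≤
      Eu (fun D : OrientedChordDiagram n => ind (∃ x u, Short K D.1 x ∧ Short K D.1 u ∧ Crosses D.1 x u)) +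
      (Eu (fun D : OrientedChordDiagram n => ind (Short K D.1 o)) +
      (Eu (fun D : OrientedChordDiagram n => ind (Short K D.1 p)) +
      (Eu (fun D : OrientedChordDiagram n => ind (¬ (4*g+3 ≤ (D.1.1 o:ℕ) ∧ (D.1.1 o:ℕ)+(4*g+3) < 2*n))) +
      Eu (fun D : OrientedChordDiagram n => ind ((4*g+3 ≤ (D.1.1 o:ℕ) ∧ (D.1.1 o:ℕ)+(4*g+3) < 2*n) ∧
        ∃ x, ¬Short K D.1 x ∧ ¬MutualReach D x o))))) := by
    rw [← Eu_add, ← Eu_add, ← Eu_add, ← Eu_add]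
    apply Eu_mono
    intro D
    refine le_trans (ind_mono ?_) ((ind_or_le _ _).trans (add_le_add_right ((ind_or_le _ _).trans
      (add_le_add_right ((ind_or_le _ _).trans (add_le_add_right (ind_or_le _ _) _)) _)) _))
    intro h
    by_contra hc
    simp only [not_or] at hc
    obtain ⟨c1, c2, c3, c4, c5⟩ := hc
    apply h
    rw [not_not] at c4
    refine ⟨?_, ?_, c2, c3, ?_, ?_⟩
    · intro x hx
      by_contra hm
      exact c5 ⟨c4, x, hx, hm⟩
    · intro x u hx hu hcr
      exact c1 ⟨x, u, hx, hu, hcr⟩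
    · intro h; simp [ho, hp, Fin.ext_iff] at h
    · intro h
      apply c2
      unfold Short
      rw [← h]
      simp [ho, hp, hK]
  refine key.trans ?_
  have e2' : ((2*K+1:ℕ):ℝ)/n = (2*K+1)/n := by push_cast; rfl
  have e4' : ((2*(4*g+3):ℕ):ℝ)/n = (8*g+6)/n := by push_cast; congr 1; ring
  rw [e2'] at e2 e3
  rw [e4'] at e4
  have e6 : 2*(2*(K:ℝ)+1)/n = (2*K+1)/n + (2*K+1)/n := by ring
  linarith

lemma good_whp (ε : ℝ) (hε : 0 < ε) (K0 : ℕ) : ∃ K, K0 ≤ K ∧ 1 ≤ K ∧ ∃ c : ℕ → ℝ, ∃ C : ℝ,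
    Tendsto c atTop (nhds C) ∧ C ≤ ε ∧ ∀ᶠ n : ℕ in atTop, ∃ o p : Fin (2*n),
      Eu (fun D : OrientedChordDiagram n => ind (¬ Good K n D o p)) ≤ c n := by
  obtain ⟨M, hM⟩ := exists_nat_gt (max 1 (16/ε))
  have hM1 : (1:ℝ) < M := (le_max_left _ _).trans_lt hM
  have hM2 : 16/ε < M := (le_max_right _ _).trans_lt hM
  have hMpos : 0 < M := by
    have : (0:ℝ) < M := by linarith
    exact_mod_cast this
  set η : ℝ := 1/(4*M) with hη
  have h0 : 0 < η := by positivity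
  have h1 : η ≤ 1/4 := by
    rw [hη]; apply one_div_le_one_div_of_le (by norm_num); linarith
  set σ : ℝ := Real.sqrt (1 - η/4) with hσ
  have h2 : 0 ≤ σ := Real.sqrt_nonneg _
  have h3 : σ^2 = 1 - η/4 := Real.sq_sqrt (by linarith)
  have hσ1 : σ < 1 := by
    by_contra hc
    push Not at hc
    nlinarith
  have hlim : Tendsto (fun K : ℕ => 16*(σ^K*(1-σ)⁻¹)) atTop (nhds 0) := by
    have := ((tendsto_pow_atTop_nhds_zero_of_lt_one h2 hσ1).mul_const ((1-σ)⁻¹)).const_mul 16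
    simpa using this
  have hev := hlim.eventually (gt_mem_nhds (show (0:ℝ) < ε/2 by linarith))
  obtain ⟨K, hKε, hK⟩ := (hev.and (eventually_ge_atTop (max K0 1))).exists
  refine ⟨K, (le_max_left _ _).trans hK, (le_max_right _ _).trans hK, ?_⟩
  set A : ℝ := 16*(σ^K*(1-σ)⁻¹) with hA
  refine ⟨fun n => (8/M + 6/n) + (A + 8*((1-σ)⁻¹*(1-σ)⁻¹)/n + 32*(M*(((n/M:ℕ):ℝ)*(σ^2)^(n/M) + (σ^2)^(n/M))))
      + 2*(2*K+1)^3/n + 2*(2*K+1)/n, (8/M + 0) + (A + 0 + 32*(M*(0+0))) + 0 + 0, ?_, ?_, ?_⟩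
  · have hd : Tendsto (fun n : ℕ => n / M) atTop atTop := Nat.tendsto_div_const_atTop hMpos.ne'
    have hs0 : 0 ≤ σ^2 := by positivity
    have hs1 : σ^2 < 1 := by rw [h3]; linarith
    have l1 := (tendsto_self_mul_const_pow_of_lt_one hs0 hs1).comp hd
    have l2 := (tendsto_pow_atTop_nhds_zero_of_lt_one hs0 hs1).comp hd
    have z := fun c : ℝ => tendsto_const_div_atTop_nhds_zero_nat c
    exact (((tendsto_const_nhds.add (z 6)).add ((tendsto_const_nhds.add (z _)).add
      (((l1.add l2).const_mul (M:ℝ)).const_mul 32))).add (z _)).add (z _)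
  · have : 8/(M:ℝ) ≤ ε/2 := by
      rw [div_le_iff₀ (by linarith)]
      rw [div_lt_iff₀ hε] at hM2
      linarith
    linarith
  · filter_upwards [eventually_ge_atTop (max 4 M)] with n hn
    have hn4 : 4 ≤ n := (le_max_left _ _).trans hn
    have hnM : M ≤ n := (le_max_right _ _).trans hn
    have hn0 : (0:ℝ) < n := by
      have : 0 < n := by omega
      exact_mod_cast this
    have hM0 : (0:ℝ) < M := by linarith
    have hg1 : 1 ≤ n / M := (Nat.one_le_div_iff hMpos).2 hnM
    have hg2 : n ≤ M * (n/M + 1) := by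
      have := Nat.lt_mul_div_succ n hMpos
      omega
    have hg3 : M * (n/M) ≤ n := Nat.mul_div_le n M
    set g := n / M with hg
    have hg1' : (1:ℝ) ≤ g := by exact_mod_cast hg1
    have hg2' : (n:ℝ) ≤ M * (g + 1) := by exact_mod_cast hg2
    have hg3' : (M:ℝ) * g ≤ n := by exact_mod_cast hg3
    have hgη : 2*η*n ≤ g := by
      have : 2*η*n = n/(2*M) := by rw [hη]; field_simp; ring
      rw [this, div_le_iff₀ (by linarith)]
      nlinarith
    obtain ⟨o, p, h⟩ := bad_prob (n := n) (g := g) (K := K) η σ h0 (by linarith) h2 h3 hgη hn4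
      ((le_max_right _ _).trans hK)
    refine ⟨o, p, h.trans ?_⟩
    have t1 : (8*g+6)/(n:ℝ) ≤ 8/M + 6/n := by
      rw [add_div]
      have : 8*(g:ℝ)/n ≤ 8/M := by
        rw [div_le_div_iff₀ hn0 hM0]; nlinarith
      linarith
    have t2 : n*σ^(2*g) ≤ M*((g:ℝ)*(σ^2)^g + (σ^2)^g) := by
      rw [pow_mul]
      have : 0 ≤ (σ^2)^g := by positivity
      nlinarith
    linarith

lemma second_prob : Tendsto
      (fun n : ℕ => probD n (fun D =>
        (∃ x u : Fin (2*n), u ≠ x ∧ u ≠ D.1.1 x ∧ MutualReach D x u) ∧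
        ∀ x y : Fin (2*n),
          (∃ u, u ≠ x ∧ u ≠ D.1.1 x ∧ MutualReach D x u) →
          (∃ v, v ≠ y ∧ v ≠ D.1.1 y ∧ MutualReach D y v) →
          MutualReach D x y))
      Filter.atTop (nhds 1) := by
  apply tendsto_approx
  intro ε hε
  obtain ⟨K, -, -, c, C, hc, hC, hev⟩ := good_whp ε hε 0
  refine ⟨fun _ => 1, c, 1, C, tendsto_const_nhds, hc, by simpa using hε.le, hC, ?_⟩
  filter_upwards [hev] with n ⟨o, p, h⟩
  refine le_trans ?_ h
  rw [probD_eq, ← Eu_one (Ω := OrientedChordDiagram n), ← Eu_sub]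
  refine (Eu_abs _).trans (Eu_mono fun D => ?_)
  by_cases hg : Good K n D o p
  · rw [ind_true hg.second]; simp [ind_nonneg]
  · rw [ind_true hg]
    have a := ind_nonneg ((∃ x u : Fin (2*n), u ≠ x ∧ u ≠ D.1.1 x ∧ MutualReach D x u) ∧
        ∀ x y : Fin (2*n),
          (∃ u, u ≠ x ∧ u ≠ D.1.1 x ∧ MutualReach D x u) →
          (∃ v, v ≠ y ∧ v ≠ D.1.1 y ∧ MutualReach D y v) →
          MutualReach D x y)
    have b := ind_le_one ((∃ x u : Fin (2*n), u ≠ x ∧ u ≠ D.1.1 x ∧ MutualReach D x u) ∧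
        ∀ x y : Fin (2*n),
          (∃ u, u ≠ x ∧ u ≠ D.1.1 x ∧ MutualReach D x u) →
          (∃ v, v ≠ y ∧ v ≠ D.1.1 y ∧ MutualReach D y v) →
          MutualReach D x y)
    rw [abs_le]; constructor <;> linarith

lemma first_prob (m : ℕ) : Tendsto (fun n : ℕ => probD n (fun D => singleCount n D = m))
    atTop (nhds (Real.exp (-3) * 3^m / (m.factorial : ℝ))) := by
  have hl : Tendsto (fun K => Real.exp (-lam K) * lam K ^ m / (m.factorial : ℝ)) atTop
      (nhds (Real.exp (-3) * 3^m / (m.factorial : ℝ))) :=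
    (((Real.continuous_exp.tendsto _).comp lam_tendsto.neg).mul (lam_tendsto.pow m)).div_const _
  apply tendsto_approx
  intro ε hε
  obtain ⟨K0, hK0⟩ := (Metric.tendsto_atTop.1 hl) ε hε
  obtain ⟨K, hK, hK1, c, C, hc, hC, hev⟩ := good_whp ε hε K0
  refine ⟨_, c, _, C, TK_poisson K hK1 m, hc, ?_, hC, ?_⟩
  · have := hK0 K hK
    rw [Real.dist_eq] at this
    exact this.le
  · filter_upwards [hev] with n ⟨o, p, h⟩
    refine le_trans ?_ h
    rw [probD_eq, ← Eu_sub]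
    refine (Eu_abs _).trans (Eu_mono fun D => ?_)
    by_cases hg : Good K n D o p
    · rw [hg.count, sub_self, abs_zero]; exact ind_nonneg _
    · rw [ind_true hg]
      have a := ind_nonneg (singleCount n D = m)
      have b := ind_le_one (singleCount n D = m)
      have a' := ind_nonneg (TK K n D = m)
      have b' := ind_le_one (TK K n D = m)
      rw [abs_le]; constructor <;> linarith

end Chord

theorem stmt17 :
    (∀ m : ℕ,
      Filter.Tendsto
        (fun n : ℕ => probD n (fun D => singleCount n D = m))
        Filter.atTop (nhds (Real.exp (-3) * 3^m / (m.factorial : ℝ)))) ∧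
    Filter.Tendsto
      (fun n : ℕ => probD n (fun D =>
        (∃ x u : Fin (2*n), u ≠ x ∧ u ≠ D.1.1 x ∧ MutualReach D x u) ∧
        ∀ x y : Fin (2*n),
          (∃ u, u ≠ x ∧ u ≠ D.1.1 x ∧ MutualReach D x u) →
          (∃ v, v ≠ y ∧ v ≠ D.1.1 y ∧ MutualReach D y v) →
          MutualReach D x y))
      Filter.atTop (nhds 1) := by
  exact ⟨Chord.first_prob, Chord.second_prob⟩
end

section
/- Let α(C_n) denote the independence number of the uniformly random chord diagram C_n, i.e., the largest cardinality of a set of pairwise non-crossing chords of C_n. Then with high probability α(C_n) ≤ e·√(2n); that is, P(C_n contains a set of ⌈e√(2n)⌉ pairwise non-crossing chords) → 0 as n→∞. -/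
open scoped Classical
open Finset Filter

abbrev FInv (α : Type*) := {f : α → α // (∀ i, f (f i) = i) ∧ ∀ i, f i ≠ i}

/-- fixed-point-free involutions as permutations -/
noncomputable def finvEquiv (α : Type*) [Fintype α] [DecidableEq α] (m : ℕ)
    (h : Fintype.card α = 2 * m) :
    FInv α ≃ {g : Equiv.Perm α // g.cycleType = Multiset.replicate m 2} where
  toFun f := ⟨⟨f.1, f.1, f.2.1, f.2.1⟩, by
    set g : Equiv.Perm α := ⟨f.1, f.1, f.2.1, f.2.1⟩ with hg
    have h2 : g ^ 2 = 1 := by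
      ext x
      simp [pow_two, hg, f.2.1]
    have h3 := (Equiv.Perm.pow_prime_eq_one_iff (p := 2)).1 h2
    have h4 : g.support = Finset.univ := by
      ext x
      simp [hg, f.2.2]
    have h5 := g.sum_cycleType
    rw [h4, Finset.card_univ, h] at h5
    have h6 := Multiset.eq_replicate_of_mem h3
    rw [h6, Multiset.sum_replicate] at h5
    rw [h6]
    congr 1
    simp at h5
    omega⟩
  invFun g := ⟨g.1, by
    have h2 : g.1 ^ 2 = 1 := by
      apply (Equiv.Perm.pow_prime_eq_one_iff (p := 2)).2
      intro c hc
      rw [g.2] at hc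
      exact Multiset.eq_of_mem_replicate hc
    refine ⟨fun i => ?_, fun i => ?_⟩
    · have := congrArg (fun s : Equiv.Perm α => s i) h2
      simpa [pow_two] using this
    · have h5 := g.1.sum_cycleType
      rw [g.2, Multiset.sum_replicate, smul_eq_mul] at h5
      have h6 : g.1.support = Finset.univ := by
        apply Finset.eq_univ_of_card
        omega
      have : i ∈ g.1.support := by rw [h6]; simp
      simpa using this⟩
  left_inv f := by ext; rfl
  right_inv g := by ext; rfl

lemma card_finv (α : Type*) [Fintype α] [DecidableEq α] (m : ℕ)
    (h : Fintype.card α = 2 * m) :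
    Fintype.card (FInv α) * (2 ^ m * m.factorial) = (2 * m).factorial := by
  rw [Fintype.card_congr (finvEquiv α m h)]
  have key := Equiv.Perm.card_of_cycleType_mul_eq α (Multiset.replicate m 2)
  have hs : (Multiset.replicate m 2).sum = 2 * m := by
    rw [Multiset.sum_replicate, smul_eq_mul, mul_comm]
  rw [if_pos ⟨by rw [hs, h], fun a ha => (Multiset.eq_of_mem_replicate ha).ge⟩, hs, h] at key
  rw [Fintype.card_subtype]
  rw [← key]
  congr 1
  rw [Nat.sub_self, Multiset.prod_replicate]
  by_cases hm : m = 0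
  · subst hm; simp
  · have : (Multiset.replicate m 2).toFinset = {2} := by
      ext a; simp [Multiset.mem_replicate, hm]
    rw [this]
    simp

/-- `A` is the set of left endpoints and `B` the set of right endpoints of a noncrossing set. -/
def NC {n : ℕ} (A B : Finset (Fin (2*n))) (C : ChordDiagram n) : Prop :=
  (∀ x ∈ A, x < C.1 x ∧ C.1 x ∈ B) ∧ (∀ x ∈ B, C.1 x < x ∧ C.1 x ∈ A) ∧
  ∀ x ∈ A, ∀ u ∈ A ∪ B, ¬ Crosses C x u

lemma nc_between {n : ℕ} {A B : Finset (Fin (2*n))} {C : ChordDiagram n} (h : NC A B C)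
    {a u : Fin (2*n)} (ha : a ∈ A) (hu : u ∈ A ∪ B) (h1 : a < u) (h2 : u < C.1 a) :
    a < C.1 u ∧ C.1 u < C.1 a := by
  have hc := h.2.2 a ha u hu
  have hl := (h.1 a ha).1
  unfold Crosses Between at hc
  rw [min_eq_left hl.le, max_eq_right hl.le] at hc
  by_contra hcon
  exact hc (Or.inl ⟨⟨h1, h2⟩, hcon⟩)

lemma nc_le {n : ℕ} {A B : Finset (Fin (2*n))} {C D : ChordDiagram n} (h : NC A B C)
    (h' : NC A B D) (a : Fin (2*n)) (ha : a ∈ A) : D.1 a ≤ C.1 a := by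
  induction a using WellFoundedGT.induction with
  | ind a ih =>
    by_contra! hlt
    obtain ⟨h1, h2⟩ := h.1 a ha
    have h3 := nc_between h' ha (Finset.mem_union_right _ h2) h1 hlt
    have h4 := h'.2.1 _ h2
    have h5 := ih _ h3.1 h4.2
    rw [D.2.1] at h5
    have h6 := nc_between h ha (Finset.mem_union_left _ h4.2) h3.1 h4.1
    exact absurd h5 (not_le.2 h6.2)

lemma nc_eq {n : ℕ} {A B : Finset (Fin (2*n))} {C D : ChordDiagram n} (h : NC A B C)
    (h' : NC A B D) (a : Fin (2*n)) (ha : a ∈ A ∪ B) : D.1 a = C.1 a := by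
  have key : ∀ a ∈ A, D.1 a = C.1 a := fun a ha => le_antisymm (nc_le h h' a ha) (nc_le h' h a ha)
  rcases Finset.mem_union.1 ha with ha | ha
  · exact key a ha
  · have h1 := key _ (h.2.1 a ha).2
    rw [C.2.1] at h1
    have h2 := congrArg D.1 h1
    rw [D.2.1] at h2
    exact h2.symm

lemma nc_mem {n : ℕ} {A B : Finset (Fin (2*n))} {C : ChordDiagram n} (h : NC A B C)
    (a : Fin (2*n)) (ha : a ∈ A ∪ B) : C.1 a ∈ A ∪ B := by
  rcases Finset.mem_union.1 ha with ha | ha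
  · exact Finset.mem_union_right _ (h.1 a ha).2
  · exact Finset.mem_union_left _ (h.2.1 a ha).2

lemma nc_card {n : ℕ} (A B : Finset (Fin (2*n))) :
    (Finset.univ.filter (NC A B)).card ≤ Fintype.card (FInv {x : Fin (2*n) // x ∉ A ∪ B}) := by
  rw [← Fintype.card_subtype]
  have hmem : ∀ C : {C : ChordDiagram n // NC A B C}, ∀ x, x ∉ A ∪ B → C.1.1 x ∉ A ∪ B := by
    intro C x hx hc
    apply hx
    have := nc_mem C.2 _ hc
    rwa [C.1.2.1] at this
  let F : {C : ChordDiagram n // NC A B C} → FInv {x : Fin (2*n) // x ∉ A ∪ B} := fun C =>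
    ⟨fun x => ⟨C.1.1 x.1, hmem C x.1 x.2⟩, fun x => Subtype.ext (C.1.2.1 x.1),
      fun x hx => C.1.2.2 x.1 (congrArg Subtype.val hx)⟩
  apply Fintype.card_le_of_injective F
  intro C D hCD
  apply Subtype.ext
  apply Subtype.ext
  funext x
  by_cases hx : x ∈ A ∪ B
  · exact nc_eq D.2 C.2 x hx
  · have := congrFun (congrArg Subtype.val hCD) ⟨x, hx⟩
    exact congrArg Subtype.val this

lemma exists_nc {n k : ℕ} (C : ChordDiagram n) (S : Finset (Fin (2*n)))
    (h1 : ∀ x ∈ S, C.1 x ∈ S) (h2 : S.card = 2 * k)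
    (h3 : ∀ x ∈ S, ∀ u ∈ S, ¬ Crosses C x u) :
    ∃ A ∈ Finset.powersetCard k (Finset.univ : Finset (Fin (2*n))),
      ∃ B ∈ Finset.powersetCard k (Finset.univ \ A), NC A B C := by
  set A := S.filter (fun x => x < C.1 x) with hA
  set B := S.filter (fun x => ¬ x < C.1 x) with hB
  have hlt : ∀ x, ¬ x < C.1 x → C.1 x < x := fun x hx => lt_of_le_of_ne (not_lt.1 hx) (C.2.2 x)
  have hcard : A.card = B.card := by
    apply Finset.card_bij' (fun x _ => C.1 x) (fun x _ => C.1 x)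
    · intro x hx
      rw [hA, Finset.mem_filter] at hx
      rw [hB, Finset.mem_filter, C.2.1]
      exact ⟨h1 x hx.1, not_lt.2 hx.2.le⟩
    · intro x hx
      rw [hB, Finset.mem_filter] at hx
      rw [hA, Finset.mem_filter, C.2.1]
      exact ⟨h1 x hx.1, hlt x hx.2⟩
    · intro x _; exact C.2.1 x
    · intro x _; exact C.2.1 x
  have hsum : A.card + B.card = S.card := Finset.card_filter_add_card_filter_not _
  refine ⟨A, Finset.mem_powersetCard.2 ⟨Finset.subset_univ _, by omega⟩, B,
    Finset.mem_powersetCard.2 ⟨?_, by omega⟩, ?_, ?_, ?_⟩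
  · intro x hx
    rw [hB, Finset.mem_filter] at hx
    simp [hA, hx.2]
  · intro x hx
    rw [hA, Finset.mem_filter] at hx
    rw [hB, Finset.mem_filter, C.2.1]
    exact ⟨hx.2, h1 x hx.1, not_lt.2 hx.2.le⟩
  · intro x hx
    rw [hB, Finset.mem_filter] at hx
    rw [hA, Finset.mem_filter, C.2.1]
    exact ⟨hlt x hx.2, h1 x hx.1, hlt x hx.2⟩
  · intro x hx u hu
    refine h3 x (Finset.mem_filter.1 hx).1 u ?_
    rcases Finset.mem_union.1 hu with hu | hu
    · exact (Finset.mem_filter.1 hu).1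
    · exact (Finset.mem_filter.1 hu).1

lemma event_card {n k : ℕ} (hk : k ≤ n) (E : ChordDiagram n → Prop)
    (hE : ∀ C, E C → ∃ S : Finset (Fin (2*n)), (∀ x ∈ S, C.1 x ∈ S) ∧ S.card = 2 * k ∧
          ∀ x ∈ S, ∀ u ∈ S, ¬ Crosses C x u) :
    (Finset.univ.filter E).card * (2 ^ (n-k) * (n-k).factorial) ≤
      (2*n).choose k * ((2*n-k).choose k * (2*(n-k)).factorial) := by
  have hsub : Finset.univ.filter E ⊆
      (Finset.powersetCard k (Finset.univ : Finset (Fin (2*n)))).biUnion (fun A =>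
        (Finset.powersetCard k (Finset.univ \ A)).biUnion fun B =>
          Finset.univ.filter (NC A B)) := by
    intro C hC
    obtain ⟨S, h1, h2, h3⟩ := hE C (Finset.mem_filter.1 hC).2
    obtain ⟨A, hA, B, hB, h⟩ := exists_nc C S h1 h2 h3
    simp only [Finset.mem_biUnion]
    exact ⟨A, hA, B, hB, by simp [h]⟩
  refine (Nat.mul_le_mul_right _ ((Finset.card_le_card hsub).trans Finset.card_biUnion_le)).trans ?_
  rw [Finset.sum_mul]
  refine (Finset.sum_le_card_nsmul _ _ ((2*n-k).choose k * (2*(n-k)).factorial) ?_).trans ?_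
  · intro A hA
    rw [Finset.mem_powersetCard] at hA
    refine (Nat.mul_le_mul_right _ Finset.card_biUnion_le).trans ?_
    rw [Finset.sum_mul]
    have hc : (Finset.univ \ A).card = 2 * n - k := by
      rw [Finset.card_sdiff_of_subset (Finset.subset_univ _), hA.2]; simp
    refine (Finset.sum_le_card_nsmul _ _ ((2*(n-k)).factorial) ?_).trans ?_
    · intro B hB
      rw [Finset.mem_powersetCard] at hB
      rw [← card_finv {x : Fin (2*n) // x ∉ A ∪ B} (n-k) ?_]
      · exact Nat.mul_le_mul_right _ (nc_card A B)
      · have hd : Disjoint A B :=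
          (Finset.disjoint_of_subset_left hB.1 Finset.sdiff_disjoint).symm
        rw [Fintype.card_subtype_compl, Fintype.card_coe, Finset.card_union_of_disjoint hd,
          hA.2, hB.2, Fintype.card_fin]
        omega
    · rw [Finset.card_powersetCard, hc, smul_eq_mul]
  · rw [Finset.card_powersetCard, smul_eq_mul]; simp

lemma prob_le {n k : ℕ} (hk : k ≤ n) (E : ChordDiagram n → Prop)
    (hE : ∀ C, E C → ∃ S : Finset (Fin (2*n)), (∀ x ∈ S, C.1 x ∈ S) ∧ S.card = 2 * k ∧
          ∀ x ∈ S, ∀ u ∈ S, ¬ Crosses C x u) :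
    prob n E ≤ (2 * n : ℝ) ^ k / ((k.factorial : ℝ) ^ 2) := by
  have h1 := event_card hk E hE
  have h2 : Fintype.card (ChordDiagram n) * (2 ^ n * n.factorial) = (2 * n).factorial := by
    convert card_finv (Fin (2*n)) n (by simp)
  have h3 := Nat.choose_mul_factorial_mul_factorial (n := 2*n) (k := k) (by omega)
  have h4 := Nat.choose_mul_factorial_mul_factorial (n := 2*n-k) (k := k) (by omega)
  have h5 : 2 * n - k - k = 2 * (n - k) := by omega
  rw [h5] at h4
  have h6 : n.factorial ≤ n ^ k * (n-k).factorial := by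
    rw [← Nat.factorial_mul_descFactorial hk, mul_comm]
    exact Nat.mul_le_mul_right _ (Nat.descFactorial_le_pow n k)
  have h7 : 2 ^ n = 2 ^ k * 2 ^ (n-k) := by rw [← pow_add]; congr 1; omega
  have hN : 0 < Fintype.card (ChordDiagram n) := by
    rcases Nat.eq_zero_or_pos (Fintype.card (ChordDiagram n)) with h | h
    · rw [h, zero_mul] at h2; exact absurd h2.symm (Nat.factorial_ne_zero _)
    · exact h
  unfold prob
  rw [Finset.card_univ, div_le_div_iff₀ (by exact_mod_cast hN) (by positivity)]
  norm_cast
  set N := Fintype.card (ChordDiagram n)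
  set e := (Finset.univ.filter E).card
  have hpos : 0 < 2 ^ (n-k) * (n-k).factorial := by positivity
  refine Nat.le_of_mul_le_mul_right ?_ hpos
  calc e * k.factorial ^ 2 * (2 ^ (n-k) * (n-k).factorial)
      = (e * (2 ^ (n-k) * (n-k).factorial)) * k.factorial ^ 2 := by ring
    _ ≤ ((2*n).choose k * ((2*n-k).choose k * (2*(n-k)).factorial)) * k.factorial ^ 2 :=
        Nat.mul_le_mul_right _ h1
    _ = (2*n).choose k * k.factorial * ((2*n-k).choose k * k.factorial * (2*(n-k)).factorial) := by
        ring
    _ = N * (2 ^ n * n.factorial) := by rw [h4, h3, h2]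
    _ ≤ N * (2 ^ n * (n ^ k * (n-k).factorial)) := by gcongr
    _ = (2 * n) ^ k * N * (2 ^ (n-k) * (n-k).factorial) := by rw [h7, mul_pow]; ring

lemma final_bound {n k : ℕ} (hk0 : 0 < k) (hk : Real.exp 1 * Real.sqrt (2*n) ≤ k) :
    (2 * n : ℝ) ^ k / ((k.factorial : ℝ) ^ 2) ≤ 1 / k := by
  have hs := Stirling.le_factorial_stirling k
  have hk' : (0:ℝ) < k := by exact_mod_cast hk0
  have h1 : Real.sqrt (2*n) ≤ k / Real.exp 1 := by
    rw [le_div_iff₀ (Real.exp_pos 1), mul_comm]; exact hk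
  have h2 : (2 * n : ℝ) ≤ (k / Real.exp 1) ^ 2 := by
    rw [← Real.sq_sqrt (by positivity : (0:ℝ) ≤ 2 * n)]
    gcongr
  have h3 : (2 * n : ℝ) ^ k ≤ ((k / Real.exp 1) ^ k) ^ 2 := by
    rw [← pow_mul, mul_comm k 2, pow_mul]
    exact pow_le_pow_left₀ (by positivity) h2 k
  have h4 : (Real.sqrt (2 * Real.pi * k) * (k / Real.exp 1) ^ k) ^ 2 ≤ (k.factorial : ℝ) ^ 2 := by
    gcongr
  rw [mul_pow, Real.sq_sqrt (by positivity)] at h4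
  rw [div_le_div_iff₀ (by positivity) hk', one_mul]
  have h5 : (2 * n : ℝ) ^ k * k ≤ ((k / Real.exp 1) ^ k) ^ 2 * (2 * Real.pi * k) := by
    have := Real.pi_gt_three
    gcongr
    nlinarith
  linarith

lemma prob_zero {n : ℕ} (E : ChordDiagram n → Prop) (h : ∀ C, ¬ E C) : prob n E = 0 := by
  unfold prob
  rw [Finset.filter_false_of_mem (fun C _ => h C)]
  simp

theorem stmt19 :
    Filter.Tendsto
      (fun n : ℕ => prob n (fun C =>
        ∃ S : Finset (Fin (2*n)),
          (∀ x ∈ S, C.1 x ∈ S) ∧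
          S.card = 2 * ⌈Real.exp 1 * Real.sqrt (2*n)⌉₊ ∧
          ∀ x ∈ S, ∀ u ∈ S, ¬ Crosses C x u))
      Filter.atTop (nhds 0) := by
  have hlim : Filter.Tendsto (fun n : ℕ => 1 / Real.sqrt n) Filter.atTop (nhds 0) := by
    simp only [one_div]
    exact (Real.tendsto_sqrt_atTop.comp tendsto_natCast_atTop_atTop).inv_tendsto_atTop
  refine squeeze_zero' (Filter.Eventually.of_forall fun n => ?_) ?_ hlim
  · unfold prob; positivity
  · filter_upwards [Filter.eventually_gt_atTop 0] with n hn
    have hn' : (0:ℝ) < n := by exact_mod_cast hn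
    set k := ⌈Real.exp 1 * Real.sqrt (2*n)⌉₊ with hkdef
    have hk : Real.exp 1 * Real.sqrt (2*n) ≤ k := Nat.le_ceil _
    have hs : Real.sqrt n ≤ k := by
      refine le_trans ?_ hk
      have h1 : Real.sqrt n ≤ Real.sqrt (2*n) := Real.sqrt_le_sqrt (by linarith)
      have h2 : (1:ℝ) ≤ Real.exp 1 := Real.one_le_exp zero_le_one
      nlinarith [Real.sqrt_nonneg (2*n : ℝ)]
    have hsp : 0 < Real.sqrt n := Real.sqrt_pos.2 hn'
    have hk0 : 0 < k := by exact_mod_cast hsp.trans_le hs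
    by_cases hkn : k ≤ n
    · refine (prob_le hkn _ (fun C h => h)).trans ((final_bound hk0 hk).trans ?_)
      exact one_div_le_one_div_of_le hsp hs
    · have : prob n (fun C => ∃ S : Finset (Fin (2*n)),
          (∀ x ∈ S, C.1 x ∈ S) ∧ S.card = 2 * k ∧ ∀ x ∈ S, ∀ u ∈ S, ¬ Crosses C x u) = 0 := by
        apply prob_zero
        · rintro C ⟨S, -, h, -⟩
          have := S.card_le_univ
          rw [Fintype.card_fin] at this
          omega
      rw [this]
      positivity
end
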